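/- arXiv:1008.0985 — 3 statements merged into one kernel-verified Lean document; each statement's English description precedes it below -/
import Mathlib

section
/- (Tomita) Let H be a complex Hilbert space, let A be a von Neumann subalgebra of B(H), and suppose there exists a vector ξ ∈ H that is cyclic for A (the linear span of {xξ : x ∈ A} is dense in H) and separating for A (for x ∈ A, xξ = 0 implies x = 0). Then there exists a conjugate-linear isometric bijection J : H → H with J² = 1 such that for all x, y ∈ A the operator x commutes with J y* J⁻¹, i.e. x (J y* J⁻¹) = (J y* J⁻¹) x. -/
/-!
The proof works with bounded operators only, following the approach of Rieffel and van Daele.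

Write `A'` for the commutant, and let `K` be the closure of `{a ξ | a ∈ A' self-adjoint}`
(`tmtReal`). It is a closed real subspace with `K ∩ iK = 0` (`tmt_real_inter`), and it spans a dense
complex subspace (`tmt_real_dense`). Let `P` and `Q` be the real-orthogonal projections onto `K` and
`iK`. Then `R = P + Q` is complex linear, `P - Q` is conjugate linear, and
`(P - Q)² = R (2 - R)`. The polar decomposition `P - Q = J T`, with `T = √(R (2 - R))`, yields the
conjugate-linear involution `J`; the modular operator is `Δ = (2 - R) / R`, and only the isometric
flow `u t = Δ ^ (-i t)` is needed (`tmt_modular`, `tmt_polar`, `tmt_exists_flow`).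

For `x ∈ A` self-adjoint and `λ = exp (-i θ / 2)` with `|θ| < π`, the linear Radon–Nikodym theorem
(`tmt_radon_nikodym`) provides a self-adjoint `h ∈ A'` with `P (x ξ) = P (2 conj λ h ξ)`. This
translates into the operator identity (`tmt_key`), with `y = J x J`,
`T y T = λ (2 - R) h R + conj λ R h (2 - R)`,
that is, formally, `y = λ Δ^(1/2) h Δ^(-1/2) + conj λ Δ^(-1/2) h Δ^(1/2)`. The right-hand side is a
sum of boundary values on a strip of width one, and contour integration (`tmt_strip_integral`)
inverts the relation (`tmt_flow_integral`):
`∫ exp (θ t) / cosh (π t) • (u t)* y (u t) dt = (2 ∫ 1 / cosh (π t) dt) • h`.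

For `z ∈ A` the operators `h` commute with `z`. Hence the commutator of `(u t)* y (u t)` with `z`,
multiplied by `1 / cosh (π t)`, has zero Laplace transform on `(-π, π)`, and vanishes by uniqueness
(`tmt_unique`). At `t = 0` this says that `J x J` commutes with `z` (`tmt_commute_of_family`).
-/

open MeasureTheory Filter Topology

/-! ### Contour integration over a strip -/

lemma tmt_exp_le_cosh (t : ℝ) : Real.exp (Real.pi * |t|) / 2 ≤ Real.cosh (Real.pi * t) := by
  rw [← Real.cosh_abs (Real.pi * t), abs_mul, abs_of_pos Real.pi_pos, Real.cosh_eq]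
  have := Real.exp_pos (-(Real.pi * |t|))
  linarith

lemma tmt_integrable_exp_abs {c : ℝ} (hc : 0 < c) :
    Integrable (fun t : ℝ => Real.exp (-c * |t|)) := by
  rw [← integrableOn_univ, ← Set.Iic_union_Ioi (a := (0 : ℝ))]
  refine IntegrableOn.union ?_ ?_
  · refine (integrableOn_exp_mul_Iic hc 0).congr_fun (fun t ht => ?_) measurableSet_Iic
    simp only [abs_of_nonpos (Set.mem_Iic.1 ht)]
    ring_nf
  · refine (integrableOn_exp_mul_Ioi (a := -c) (by linarith) 0).congr_fun
      (fun t ht => ?_) measurableSet_Ioi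
    simp only [abs_of_pos (Set.mem_Ioi.1 ht)]

lemma tmt_kernel_bound {θ : ℝ} {t : ℝ} :
    Real.exp (θ * |t|) * (Real.cosh (Real.pi * t))⁻¹ ≤ 2 * Real.exp (-(Real.pi - θ) * |t|) := by
  have h1 := tmt_exp_le_cosh t
  have h2 : 0 < Real.cosh (Real.pi * t) := Real.cosh_pos _
  rw [← div_eq_mul_inv, div_le_iff₀ h2]
  calc Real.exp (θ * |t|)
      = 2 * Real.exp (-(Real.pi - θ) * |t|) * (Real.exp (Real.pi * |t|) / 2) := by
        rw [show θ * |t| = -(Real.pi - θ) * |t| + Real.pi * |t| by ring, Real.exp_add]; ring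
    _ ≤ _ := by gcongr

lemma tmt_continuous_sech : Continuous (fun t : ℝ => (Real.cosh (Real.pi * t))⁻¹) :=
  (Real.continuous_cosh.comp (by fun_prop)).inv₀ fun t => (Real.cosh_pos _).ne'

lemma tmt_integrable_of_bound {f : ℝ → ℂ} (hf : Continuous f) {C θ : ℝ} (hθ : θ < Real.pi)
    (hb : ∀ t, ‖f t‖ ≤ C * Real.exp (θ * |t|)) :
    Integrable (fun t : ℝ => (((Real.cosh (Real.pi * t))⁻¹ : ℝ) : ℂ) * f t) := by
  have hC : 0 ≤ C := by simpa using (norm_nonneg _).trans (hb 0)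
  refine ((tmt_integrable_exp_abs (sub_pos.2 hθ)).const_mul (C * 2)).mono'
    ((Complex.continuous_ofReal.comp tmt_continuous_sech).mul hf).aestronglyMeasurable
    (Eventually.of_forall fun t => ?_)
  rw [norm_mul, Complex.norm_real, Real.norm_of_nonneg (inv_nonneg.2 (Real.cosh_pos _).le)]
  calc _ ≤ (Real.cosh (Real.pi * t))⁻¹ * (C * Real.exp (θ * |t|)) := by
        gcongr
        exact hb t
    _ = C * (Real.exp (θ * |t|) * (Real.cosh (Real.pi * t))⁻¹) := by ring
    _ ≤ C * (2 * Real.exp (-(Real.pi - θ) * |t|)) := mul_le_mul_of_nonneg_left tmt_kernel_bound hC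
    _ = _ := by ring

lemma tmt_sinh_ne {z : ℂ} (hz : z ≠ 0) (hi : |z.im| ≤ 1 / 2) :
    Complex.sinh (Real.pi * z) ≠ 0 := by
  intro h
  have h1 : Complex.sin (Real.pi * z * Complex.I) = 0 := by rw [Complex.sin_mul_I, h, zero_mul]
  obtain ⟨k, hk⟩ := Complex.sin_eq_zero_iff.1 h1
  have hpi : (Real.pi : ℂ) ≠ 0 := by exact_mod_cast Real.pi_ne_zero
  have h2 : z * Complex.I = k := by
    apply mul_left_cancel₀ hpi; rw [← mul_assoc, hk]; ring
  have h3 : z = -(k : ℂ) * Complex.I := by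
    rw [← h2, mul_comm z, neg_mul, mul_assoc, mul_comm z, ← mul_assoc, Complex.I_mul_I]; ring
  rw [h3] at hi hz
  have hk0 : k ≠ 0 := by rintro rfl; simp at hz
  have : |(k : ℝ)| ≤ 1 / 2 := by simpa using hi
  have h5 : (1 : ℝ) ≤ |(k : ℝ)| := by exact_mod_cast Int.one_le_abs hk0
  linarith

lemma tmt_sinh_lower (z : ℂ) (h : 1 ≤ |z.re|) :
    Real.exp (Real.pi * |z.re|) / 4 ≤ ‖Complex.sinh (Real.pi * z)‖ := by
  have key : ∀ w : ℂ, 1 ≤ w.re → Real.exp (Real.pi * w.re) / 4 ≤ ‖Complex.sinh (Real.pi * w)‖ := by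
    intro w hw
    have e1 : ‖Complex.exp (Real.pi * w)‖ = Real.exp (Real.pi * w.re) := by
      rw [Complex.norm_exp]; simp
    have e2 : ‖Complex.exp (-(Real.pi * w))‖ ≤ 1 := by
      rw [Complex.norm_exp, Real.exp_le_one_iff]
      have : 0 ≤ Real.pi * w.re := by positivity
      simpa using this
    have e3 : 2 ≤ Real.exp (Real.pi * w.re) := by
      have := Real.add_one_le_exp (Real.pi * w.re)
      nlinarith [Real.pi_gt_three]
    have : ‖Complex.sinh (Real.pi * w)‖
        = ‖Complex.exp (Real.pi * w) - Complex.exp (-(Real.pi * w))‖ / 2 := by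
      rw [Complex.sinh, norm_div]; simp
    rw [this]
    have := norm_sub_norm_le (Complex.exp (Real.pi * w)) (Complex.exp (-(Real.pi * w)))
    rw [e1] at this
    linarith
  rcases le_total 0 z.re with h0 | h0
  · rw [abs_of_nonneg h0] at h ⊢
    exact key z h
  · rw [abs_of_nonpos h0] at h ⊢
    have := key (-z) (by simpa using h)
    rwa [mul_neg, Complex.sinh_neg, norm_neg, Complex.neg_re] at this

/-- The value at `0` of an entire function `F`, of growth below `exp (π |Re z|)` on the strip
`|Im z| ≤ 1/2`, is recovered from its boundary values on the strip by integration against the kernel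
`1 / cosh (π t)`, up to the factor `2 ∫ 1 / cosh (π t)`, whose value is never needed. -/
lemma tmt_strip_integral (F : ℂ → ℂ) (hF : Differentiable ℂ F) {C θ : ℝ} (hθ0 : 0 ≤ θ)
    (hθ : θ < Real.pi) (hb : ∀ z : ℂ, |z.im| ≤ 1 / 2 → ‖F z‖ ≤ C * Real.exp (θ * |z.re|)) :
    ∫ t : ℝ, (((Real.cosh (Real.pi * t))⁻¹ : ℝ) : ℂ) *
        (F (t - Complex.I / 2) + F (t + Complex.I / 2))
      = ((2 * ∫ t : ℝ, (Real.cosh (Real.pi * t))⁻¹ : ℝ) : ℂ) * F 0 := by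
  have hC : ‖F 0‖ ≤ C := by simpa using hb 0 (by simp)
  have hC0 : 0 ≤ C := (norm_nonneg _).trans hC
  set s : ℂ → ℂ := fun z => Complex.sinh (Real.pi * z) with hs
  have hsd : Differentiable ℂ s := Complex.differentiable_sinh.comp (by fun_prop)
  have hs0 : s 0 = 0 := by simp [hs]
  have hds0 : dslope s 0 0 ≠ 0 := by
    rw [dslope_same]
    have : HasDerivAt s (Complex.cosh (Real.pi * 0) * (Real.pi * 1)) 0 :=
      (Complex.hasDerivAt_sinh _).comp (0 : ℂ) ((hasDerivAt_id (0 : ℂ)).const_mul (Real.pi : ℂ))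
    rw [this.deriv]
    simp [Real.pi_ne_zero]
  -- The simple pole of `(F z - F 0) / sinh (π z)` at `0` is removable.
  set q : ℂ → ℂ := fun z => dslope F 0 z / dslope s 0 z with hq
  have hq_eq : ∀ z : ℂ, z ≠ 0 → q z = (F z - F 0) / s z := by
    intro z hz
    simp only [hq, dslope_of_ne _ hz, slope_def_field, hs0, sub_zero]
    by_cases h : s z = 0
    · simp [h]
    · field_simp
  have hdF : Differentiable ℂ (dslope F 0) := by
    rw [← differentiableOn_univ, Complex.differentiableOn_dslope univ_mem]
    exact hF.differentiableOn
  have hdS : Differentiable ℂ (dslope s 0) := by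
    rw [← differentiableOn_univ, Complex.differentiableOn_dslope univ_mem]
    exact hsd.differentiableOn
  have hne : ∀ z : ℂ, |z.im| ≤ 1 / 2 → dslope s 0 z ≠ 0 := by
    intro z hz
    rcases eq_or_ne z 0 with rfl | h0
    · exact hds0
    · rw [dslope_of_ne _ h0, slope_def_field, hs0, sub_zero, sub_zero]
      exact div_ne_zero (tmt_sinh_ne h0 hz) h0
  have hqd : ∀ z : ℂ, |z.im| ≤ 1 / 2 → DifferentiableAt ℂ q z := fun z hz =>
    (hdF z).div (hdS z) (hne z hz)
  have hI2 : (Complex.I / 2).re = 0 ∧ (Complex.I / 2).im = 1 / 2 := by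
    constructor <;> simp
  have hqb : ∀ z : ℂ, |z.im| ≤ 1 / 2 → 1 ≤ |z.re| →
      ‖q z‖ ≤ 8 * C * Real.exp (-(Real.pi - θ) * |z.re|) := by
    intro z hz h1
    have hz0 : z ≠ 0 := by rintro rfl; norm_num at h1
    rw [hq_eq z hz0, norm_div]
    have h2 := tmt_sinh_lower z h1
    have h3 : 0 < Real.exp (Real.pi * |z.re|) := Real.exp_pos _
    rw [div_le_iff₀ (by linarith [show ‖s z‖ = ‖Complex.sinh (Real.pi * z)‖ from rfl])]
    have h4 : (1 : ℝ) ≤ Real.exp (θ * |z.re|) := Real.one_le_exp (by positivity)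
    calc ‖F z - F 0‖ ≤ ‖F z‖ + ‖F 0‖ := norm_sub_le _ _
      _ ≤ C * Real.exp (θ * |z.re|) + C * Real.exp (θ * |z.re|) := by
          gcongr
          · exact hb z hz
          · nlinarith
      _ = 8 * C * Real.exp (-(Real.pi - θ) * |z.re|) * (Real.exp (Real.pi * |z.re|) / 4) := by
          rw [show θ * |z.re| = -(Real.pi - θ) * |z.re| + Real.pi * |z.re| by ring, Real.exp_add]
          ring
      _ ≤ _ := by gcongr
  have hpi : ∀ t : ℝ, s (t + Complex.I / 2) = Complex.I * Real.cosh (Real.pi * t) ∧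
      s (t - Complex.I / 2) = -(Complex.I * Real.cosh (Real.pi * t)) := by
    intro t
    have e : ∀ t : ℝ, s (t + Complex.I / 2) = Complex.I * Real.cosh (Real.pi * t) := by
      intro t
      simp only [hs]
      rw [mul_add, Complex.sinh_add,
        show (Real.pi : ℂ) * (Complex.I / 2) = (Real.pi / 2 : ℂ) * Complex.I by ring,
        Complex.cosh_mul_I, Complex.sinh_mul_I, Complex.cos_pi_div_two, Complex.sin_pi_div_two]
      push_cast; ring
    refine ⟨e t, ?_⟩
    have h1 := e (-t)
    have h2 : s (t - Complex.I / 2) = - s ((-t : ℝ) + Complex.I / 2) := by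
      simp only [hs]
      rw [← Complex.sinh_neg]; congr 1; push_cast; ring
    rw [h2, h1, mul_neg, Real.cosh_neg]
  have hcosh : ∀ t : ℝ, (Real.cosh (Real.pi * t) : ℂ) ≠ 0 := fun t => by
    exact_mod_cast (Real.cosh_pos _).ne'
  have hne0 : ∀ t : ℝ, (t + Complex.I / 2 : ℂ) ≠ 0 ∧ (t - Complex.I / 2 : ℂ) ≠ 0 := by
    intro t
    constructor <;> intro h <;> have := congrArg Complex.im h <;> simp [hI2] at this
  -- On the two sides of the strip `sinh (π z)` equals `± i cosh (π t)`, so the two boundary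
  -- integrals of `q` combine into the integral of `G` against the kernel.
  set G : ℝ → ℂ := fun t => F (t - Complex.I / 2) + F (t + Complex.I / 2) - 2 * F 0 with hG
  have hqG : ∀ t : ℝ, q (t - Complex.I / 2) - q (t + Complex.I / 2)
      = Complex.I * ((((Real.cosh (Real.pi * t))⁻¹ : ℝ) : ℂ) * G t) := by
    intro t
    rw [hq_eq _ (hne0 t).1, hq_eq _ (hne0 t).2, (hpi t).1, (hpi t).2, hG]
    have hc := hcosh t
    have hI : Complex.I ≠ 0 := Complex.I_ne_zero
    push_cast at hc ⊢
    field_simp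
    rw [Complex.I_sq]; ring
  have hFb : ∀ t : ℝ, ‖F (t - Complex.I / 2)‖ ≤ C * Real.exp (θ * |t|) ∧
      ‖F (t + Complex.I / 2)‖ ≤ C * Real.exp (θ * |t|) := by
    intro t
    constructor
    · have := hb (t - Complex.I / 2) (by simp [hI2, abs_of_pos])
      simpa [hI2] using this
    · have := hb (t + Complex.I / 2) (by simp [hI2, abs_of_pos])
      simpa [hI2] using this
  have hFc : Continuous (fun t : ℝ => F (t - Complex.I / 2) + F (t + Complex.I / 2)) := by
    have := hF.continuous
    fun_prop
  have hi1 := tmt_integrable_of_bound (C := C + C) hFc hθ (fun t =>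
    (norm_add_le _ _).trans (by rw [add_mul]; exact add_le_add (hFb t).1 (hFb t).2))
  have hi2 : Integrable (fun t : ℝ => (((Real.cosh (Real.pi * t))⁻¹ : ℝ) : ℂ) * (2 * F 0)) :=
    tmt_integrable_of_bound (θ := 0) (C := ‖2 * F 0‖) continuous_const Real.pi_pos (by simp)
  have hiG : Integrable (fun t : ℝ => (((Real.cosh (Real.pi * t))⁻¹ : ℝ) : ℂ) * G t) := by
    refine (hi1.sub hi2).congr (Eventually.of_forall fun t => ?_)
    simp only [hG, Pi.sub_apply]; ring
  have hzero : ∫ t : ℝ, (((Real.cosh (Real.pi * t))⁻¹ : ℝ) : ℂ) * G t = 0 := by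
    have ht1 := intervalIntegral_tendsto_integral (hiG.const_mul Complex.I)
      (tendsto_neg_atTop_atBot.comp tendsto_natCast_atTop_atTop)
      (tendsto_natCast_atTop_atTop (R := ℝ))
    have ht2 : Tendsto (fun n : ℕ => ∫ t in ((Neg.neg ∘ Nat.cast) n : ℝ)..(n : ℝ),
        Complex.I * ((((Real.cosh (Real.pi * t))⁻¹ : ℝ) : ℂ) * G t)) atTop (𝓝 0) := by
      have hlim : Tendsto (fun n : ℕ => 16 * C * Real.exp (-(Real.pi - θ) * (n : ℝ)))
          atTop (𝓝 0) := by
        have : Tendsto (fun n : ℕ => -(Real.pi - θ) * (n : ℝ)) atTop atBot :=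
          tendsto_natCast_atTop_atTop.const_mul_atTop_of_neg (by linarith)
        simpa using (Real.tendsto_exp_atBot.comp this).const_mul (16 * C)
      refine squeeze_zero_norm' ?_ hlim
      filter_upwards [eventually_ge_atTop 1] with n hn
      have hn1 : (1 : ℝ) ≤ n := by exact_mod_cast hn
      -- Cauchy's theorem for `q` on `[-n, n] × [-1/2, 1/2]`; the vertical sides are negligible.
      have hrect := Complex.integral_boundary_rect_eq_zero_of_differentiableOn q
        ⟨-(n : ℝ), -(1 / 2)⟩ ⟨n, 1 / 2⟩ (by
          intro z hz
          refine (hqd z ?_).differentiableWithinAt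
          have := hz.2
          simp only [Set.mem_preimage] at this
          rw [Set.uIcc_of_le (by norm_num)] at this
          exact abs_le.2 this)
      have hint : ∀ ε : ℝ, |ε| ≤ 1 / 2 →
          IntervalIntegrable (fun x : ℝ => q (x + ε * Complex.I)) volume (-(n : ℝ)) n := by
        intro ε hε
        apply Continuous.intervalIntegrable
        rw [continuous_iff_continuousAt]
        intro x
        have h1 : ContinuousAt q (x + ε * Complex.I) := (hqd _ (by simpa using hε)).continuousAt
        exact ContinuousAt.comp (f := fun x : ℝ => (x + ε * Complex.I : ℂ)) h1 (by fun_prop)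
      have hside : ∀ r : ℝ, |r| = n →
          ‖∫ y : ℝ in (-(1 / 2) : ℝ)..(1 / 2), q (r + y * Complex.I)‖
            ≤ 8 * C * Real.exp (-(Real.pi - θ) * (n : ℝ)) := by
        intro r hr
        have := intervalIntegral.norm_integral_le_of_norm_le_const
          (a := (-(1 / 2) : ℝ)) (b := 1 / 2) (f := fun y : ℝ => q (r + y * Complex.I))
          (C := 8 * C * Real.exp (-(Real.pi - θ) * (n : ℝ))) (by
            intro y hy
            rw [Set.uIoc_of_le (by norm_num)] at hy
            have := hqb (r + y * Complex.I) (by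
                have : |y| ≤ 1 / 2 := abs_le.2 ⟨hy.1.le, hy.2⟩
                simpa using this)
              (by simpa [hr] using hn1)
            simpa [hr] using this)
        refine this.trans (le_of_eq ?_)
        norm_num
      have hEq : (∫ t in ((Neg.neg ∘ Nat.cast) n : ℝ)..(n : ℝ),
          Complex.I * ((((Real.cosh (Real.pi * t))⁻¹ : ℝ) : ℂ) * G t))
          = Complex.I * (∫ y : ℝ in (-(1 / 2) : ℝ)..(1 / 2), q ((-(n : ℝ) : ℝ) + y * Complex.I))
            - Complex.I * ∫ y : ℝ in (-(1 / 2) : ℝ)..(1 / 2), q ((n : ℝ) + y * Complex.I) := by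
        have h1 : (∫ t in ((Neg.neg ∘ Nat.cast) n : ℝ)..(n : ℝ),
            Complex.I * ((((Real.cosh (Real.pi * t))⁻¹ : ℝ) : ℂ) * G t))
            = (∫ x : ℝ in (-(n : ℝ))..n, q (x + ((-(1 / 2) : ℝ) : ℂ) * Complex.I))
              - ∫ x : ℝ in (-(n : ℝ))..n, q (x + ((1 / 2 : ℝ) : ℂ) * Complex.I) := by
          rw [← intervalIntegral.integral_sub (hint _ (by norm_num [abs_of_pos]))
            (hint _ (by norm_num [abs_of_pos]))]
          refine intervalIntegral.integral_congr fun t _ => ?_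
          rw [← hqG]
          congr 2 <;> push_cast <;> ring
        rw [h1]
        linear_combination hrect
      rw [hEq]
      refine (norm_sub_le _ _).trans ?_
      rw [norm_mul, norm_mul, Complex.norm_I, one_mul, one_mul]
      have a1 := hside (-(n : ℝ)) (by simp)
      have a2 := hside n (by simp)
      linarith
    have h0 := tendsto_nhds_unique ht1 ht2
    rw [integral_const_mul] at h0
    exact (mul_eq_zero.1 h0).resolve_left Complex.I_ne_zero
  have hsplit : ∫ t : ℝ, (((Real.cosh (Real.pi * t))⁻¹ : ℝ) : ℂ) * G t
      = (∫ t : ℝ, (((Real.cosh (Real.pi * t))⁻¹ : ℝ) : ℂ) *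
          (F (t - Complex.I / 2) + F (t + Complex.I / 2)))
        - ∫ t : ℝ, (((Real.cosh (Real.pi * t))⁻¹ : ℝ) : ℂ) * (2 * F 0) := by
    rw [← integral_sub hi1 hi2]
    congr 1; ext t; simp only [hG]; ring
  rw [hzero, integral_mul_const, integral_complex_ofReal] at hsplit
  rw [sub_eq_zero.1 hsplit.symm]
  push_cast; ring

/-! ### Uniqueness for a Laplace transform -/

/-- The real case of the uniqueness theorem. After adding the constant `C`, the statement says that
the finite measures with densities `k (h + C)` and `k C`, where `k t = 1 / cosh (π t)`, have the
same moment generating function on `(-π, π)`. Its complex extension is analytic on the strip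
`|Re z| < π`, hence the characteristic functions agree. -/
lemma tmt_unique_real (h : ℝ → ℝ) (hc : Continuous h) {C : ℝ} (hb : ∀ t, |h t| ≤ C)
    (h0 : ∀ θ : ℝ, |θ| < Real.pi →
      ∫ t : ℝ, Real.exp (θ * t) * ((Real.cosh (Real.pi * t))⁻¹ * h t) = 0) : ∀ t, h t = 0 := by
  have hC : 0 ≤ C := (abs_nonneg _).trans (hb 0)
  set k : ℝ → ℝ := fun t => (Real.cosh (Real.pi * t))⁻¹ with hk
  have hkpos : ∀ t, 0 < k t := fun t => inv_pos.2 (Real.cosh_pos _)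
  have hkc : Continuous k := tmt_continuous_sech
  -- Integrability of `exp (θ t) k(t) g(t)` for bounded continuous `g`.
  have hint : ∀ (g : ℝ → ℝ), Continuous g → (∀ t, |g t| ≤ 2 * C) → ∀ θ : ℝ, |θ| < Real.pi →
      Integrable (fun t => Real.exp (θ * t) * (k t * g t)) := by
    intro g hg hgb θ hθ
    have := tmt_integrable_of_bound (f := fun t => ((Real.exp (θ * t) * g t : ℝ) : ℂ))
      (C := 2 * C) (θ := |θ|) (by fun_prop) hθ (fun t => by
        rw [Complex.norm_real, Real.norm_eq_abs, abs_mul, abs_of_pos (Real.exp_pos _), mul_comm]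
        exact mul_le_mul (hgb t) (Real.exp_le_exp.2 ((le_abs_self _).trans (abs_mul _ _).le))
          (Real.exp_pos _).le (by positivity))
    refine this.re.congr (Eventually.of_forall fun t => ?_)
    have e : (((Real.cosh (Real.pi * t))⁻¹ : ℝ) : ℂ) * ((Real.exp (θ * t) * g t : ℝ) : ℂ)
      = ((Real.exp (θ * t) * (k t * g t) : ℝ) : ℂ) := by simp only [hk]; push_cast; ring
    simp only [e]; exact Complex.ofReal_re _
  set ρ : (ℝ → ℝ) → Measure ℝ := fun g =>
    volume.withDensity (fun t => ENNReal.ofReal (k t * g t)) with hρ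
  have hint0 : ∀ (g : ℝ → ℝ), Continuous g → (∀ t, |g t| ≤ 2 * C) →
      Integrable (fun t => k t * g t) := fun g hg hgb => by
    simpa using hint g hg hgb 0 (by simpa using Real.pi_pos)
  have hfin : ∀ (g : ℝ → ℝ), Continuous g → (∀ t, |g t| ≤ 2 * C) → IsFiniteMeasure (ρ g) :=
    fun g hg hgb => isFiniteMeasure_withDensity_ofReal (hint0 g hg hgb).2
  have hmeas : ∀ (g : ℝ → ℝ), Continuous g → Measurable fun t => ENNReal.ofReal (k t * g t) :=
    fun g hg => (hkc.mul hg).measurable.ennreal_ofReal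
  have hset : ∀ (g : ℝ → ℝ), Continuous g → (∀ t, 0 ≤ g t) → (∀ t, |g t| ≤ 2 * C) →
      {z : ℂ | |z.re| < Real.pi} ⊆
        {z | z.re ∈ interior (ProbabilityTheory.integrableExpSet id (ρ g))} := by
    intro g hg hg0 hgb z hz
    have : Set.Ioo (-Real.pi) Real.pi ⊆ ProbabilityTheory.integrableExpSet id (ρ g) := by
      intro θ hθ
      simp only [ProbabilityTheory.integrableExpSet, Set.mem_ofPred_eq, hρ, id]
      rw [integrable_withDensity_iff_integrable_smul' (hmeas g hg)
        (Eventually.of_forall fun _ => ENNReal.ofReal_lt_top)]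
      refine (hint g hg hgb θ (abs_lt.2 hθ)).congr (Eventually.of_forall fun t => ?_)
      simp only [smul_eq_mul]
      rw [ENNReal.toReal_ofReal (mul_nonneg (hkpos t).le (hg0 t)), mul_comm]
    exact interior_maximal this isOpen_Ioo (abs_lt.1 hz)
  have hmgf : ∀ (g : ℝ → ℝ), Continuous g → (∀ t, 0 ≤ g t) → ∀ θ : ℝ,
      ProbabilityTheory.mgf id (ρ g) θ = ∫ t, Real.exp (θ * t) * (k t * g t) := by
    intro g hg hg0 θ
    simp only [ProbabilityTheory.mgf, hρ, id]
    rw [integral_withDensity_eq_integral_toReal_smul (hmeas g hg)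
        (Eventually.of_forall fun _ => ENNReal.ofReal_lt_top)]
    congr 1; ext t
    rw [ENNReal.toReal_ofReal (mul_nonneg (hkpos t).le (hg0 t)), smul_eq_mul, mul_comm]
  set g1 : ℝ → ℝ := fun t => h t + C with hg1
  set g2 : ℝ → ℝ := fun _ => C with hg2
  have c1 : Continuous g1 := by fun_prop
  have c2 : Continuous g2 := by fun_prop
  have p1 : ∀ t, 0 ≤ g1 t := fun t => by have := abs_le.1 (hb t); simp only [hg1]; linarith
  have p2 : ∀ t, 0 ≤ g2 t := fun t => hC
  have b1 : ∀ t, |g1 t| ≤ 2 * C := fun t => by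
    rw [abs_of_nonneg (p1 t)]; have := abs_le.1 (hb t); simp only [hg1]; linarith
  have b2 : ∀ t, |g2 t| ≤ 2 * C := fun t => by
    rw [abs_of_nonneg (p2 t)]; simp only [hg2]; linarith
  have hbh : ∀ t, |h t| ≤ 2 * C := fun t => (hb t).trans (by linarith)
  have hEq : ∀ θ : ℝ, |θ| < Real.pi →
      ProbabilityTheory.mgf id (ρ g1) θ = ProbabilityTheory.mgf id (ρ g2) θ := by
    intro θ hθ
    rw [hmgf g1 c1 p1, hmgf g2 c2 p2, ← zero_add (∫ t, Real.exp (θ * t) * (k t * g2 t)),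
      ← h0 θ hθ, ← integral_add (hint h hc hbh θ hθ) (hint g2 c2 b2 θ hθ)]
    congr 1; ext t; simp only [hg1, hg2]; ring
  have := hfin g1 c1 b1
  have := hfin g2 c2 b2
  have hstrip : Set.EqOn (ProbabilityTheory.complexMGF id (ρ g1))
      (ProbabilityTheory.complexMGF id (ρ g2)) {z : ℂ | |z.re| < Real.pi} := by
    have hconv : Convex ℝ {z : ℂ | |z.re| < Real.pi} := by
      have : {z : ℂ | |z.re| < Real.pi} = Complex.reLm ⁻¹' Set.Ioo (-Real.pi) Real.pi := by
        ext z; simp [abs_lt]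
      rw [this]; exact (convex_Ioo _ _).linear_preimage _
    -- The extensions agree at the points `1 / (n + 1)`, which accumulate at `0`.
    refine AnalyticOnNhd.eqOn_of_preconnected_of_frequently_eq
      (ProbabilityTheory.analyticOnNhd_complexMGF.mono (hset g1 c1 p1 b1))
      (ProbabilityTheory.analyticOnNhd_complexMGF.mono (hset g2 c2 p2 b2))
      hconv.isPreconnected (z₀ := 0) (by simpa using Real.pi_pos) ?_
    rw [frequently_iff_seq_forall]
    refine ⟨fun n : ℕ => ((1 / ((n : ℝ) + 1) : ℝ) : ℂ), ?_, fun n => ?_⟩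
    · rw [tendsto_nhdsWithin_iff]
      constructor
      · exact_mod_cast (Complex.continuous_ofReal.tendsto 0).comp
          (tendsto_one_div_add_atTop_nhds_zero_nat (𝕜 := ℝ))
      · refine Eventually.of_forall fun n => ?_
        have : (1 / ((n : ℝ) + 1) : ℝ) ≠ 0 := by positivity
        simpa using (Complex.ofReal_ne_zero.2 this)
    · rw [ProbabilityTheory.complexMGF_ofReal, ProbabilityTheory.complexMGF_ofReal, hEq]
      rw [abs_of_pos (by positivity)]
      have : 1 / ((n : ℝ) + 1) ≤ 1 := by
        rw [div_le_one (by positivity)]; linarith [(Nat.cast_nonneg n : (0 : ℝ) ≤ n)]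
      linarith [Real.pi_gt_three]
  have hm : ρ g1 = ρ g2 := by
    apply Measure.ext_of_charFun
    ext t
    rw [← ProbabilityTheory.complexMGF_id_mul_I, ← ProbabilityTheory.complexMGF_id_mul_I]
    exact hstrip (by simpa using Real.pi_pos)
  have hae := (withDensity_eq_iff_of_sigmaFinite (hmeas g1 c1).aemeasurable
    (hmeas g2 c2).aemeasurable).1 hm
  have hfun : (fun t => k t * g1 t) = fun t => k t * g2 t := by
    refine (Continuous.ae_eq_iff_eq volume (hkc.mul c1) (hkc.mul c2)).1 ?_
    filter_upwards [hae] with t ht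
    rwa [ENNReal.ofReal_eq_ofReal_iff (mul_nonneg (hkpos t).le (p1 t))
      (mul_nonneg (hkpos t).le (p2 t))] at ht
  intro t
  have := mul_left_cancel₀ (hkpos t).ne' (congrFun hfun t)
  simpa [hg1, hg2] using this

/-- A bounded continuous function is determined by the Laplace transform, on the interval
`|θ| < π`, of its product with `1 / cosh (π t)`. -/
lemma tmt_unique (h : ℝ → ℂ) (hc : Continuous h) {C : ℝ} (hb : ∀ t, ‖h t‖ ≤ C)
    (h0 : ∀ θ : ℝ, |θ| < Real.pi →
      ∫ t : ℝ, (((Real.cosh (Real.pi * t))⁻¹ : ℝ) : ℂ) * ((Real.exp (θ * t) : ℝ) * h t) = 0) :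
    ∀ t, h t = 0 := by
  have hi : ∀ θ : ℝ, |θ| < Real.pi → Integrable
      (fun t : ℝ => (((Real.cosh (Real.pi * t))⁻¹ : ℝ) : ℂ) * ((Real.exp (θ * t) : ℝ) * h t)) := by
    intro θ hθ
    refine tmt_integrable_of_bound (C := C) (θ := |θ|) (by fun_prop) hθ fun t => ?_
    rw [norm_mul, Complex.norm_real, Real.norm_eq_abs, abs_of_pos (Real.exp_pos _), mul_comm]
    have hC : 0 ≤ C := (norm_nonneg _).trans (hb 0)
    exact mul_le_mul (hb t) (Real.exp_le_exp.2 ((le_abs_self _).trans (abs_mul _ _).le))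
      (Real.exp_pos _).le hC
  have hre : ∀ t, (h t).re = 0 := by
    refine tmt_unique_real (fun t => (h t).re) (by fun_prop)
      (fun t => (Complex.abs_re_le_norm _).trans (hb t)) fun θ hθ => ?_
    have := congrArg Complex.re (h0 θ hθ)
    rw [← RCLike.re_eq_complex_re, ← integral_re (hi θ hθ)] at this
    rw [← Complex.zero_re, ← RCLike.re_eq_complex_re, ← this]
    congr 1; ext t
    rw [RCLike.re_eq_complex_re, Complex.re_ofReal_mul, Complex.re_ofReal_mul]; ring
  have him : ∀ t, (h t).im = 0 := by
    refine tmt_unique_real (fun t => (h t).im) (by fun_prop)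
      (fun t => (Complex.abs_im_le_norm _).trans (hb t)) fun θ hθ => ?_
    have := congrArg Complex.im (h0 θ hθ)
    rw [← RCLike.im_eq_complex_im, ← integral_im (hi θ hθ)] at this
    rw [← Complex.zero_im, ← RCLike.im_eq_complex_im, ← this]
    congr 1; ext t
    rw [RCLike.im_eq_complex_im, Complex.im_ofReal_mul, Complex.im_ofReal_mul]; ring
  exact fun t => Complex.ext (hre t) (him t)

/-! ### Functional calculus -/

section Calculus
variable {H : Type*} [NormedAddCommGroup H] [InnerProductSpace ℂ H] [CompleteSpace H]

/-- The continuous functional calculus of a self-adjoint `R` with spectrum in `[0, 2]`, applied to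
the restrictions of functions which are continuous on all of `ℝ`. Working with functions on `ℝ`
avoids carrying the spectrum around: only values on `[0, 2]` matter, by the norm bound. -/
lemma tmt_calculus (R : H →L[ℂ] H) (h0 : 0 ≤ R) (h2 : R ≤ 2) :
    ∃ Φ : C(ℝ, ℂ) →⋆ₐ[ℂ] (H →L[ℂ] H), Φ ⟨fun s => (s : ℂ), Complex.continuous_ofReal⟩ = R ∧
      (∀ (g : C(ℝ, ℂ)) (C : ℝ), 0 ≤ C → (∀ s ∈ Set.Icc (0 : ℝ) 2, ‖g s‖ ≤ C) → ‖Φ g‖ ≤ C) ∧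
      (∀ f g : C(ℝ, ℂ), (∀ s, g s = Complex.exp (f s)) → Φ g = NormedSpace.exp (Φ f)) := by
  have hsa : IsSelfAdjoint R := IsSelfAdjoint.of_nonneg h0
  let r : C(spectrum ℂ R, ℝ) := ⟨fun x => (x : ℂ).re, by fun_prop⟩
  have hr : ∀ x, ((r x : ℝ) : ℂ) = x := fun x => (hsa.mem_spectrum_eq_re x.2).symm
  have hmem : ∀ x, r x ∈ spectrum ℝ R := fun x => by
    have := x.2
    rw [← hr x] at this
    exact spectrum.of_algebraMap_mem ℂ this
  have hr01 : ∀ x, r x ∈ Set.Icc (0 : ℝ) 2 := fun x => by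
    refine ⟨spectrum_nonneg_of_nonneg h0 (hmem x), ?_⟩
    have h2' : R ≤ algebraMap ℝ (H →L[ℂ] H) 2 := by
      rw [map_ofNat]; exact h2
    exact (le_algebraMap_iff_spectrum_le (ha := hsa)).1 h2' _ (hmem x)
  let φ := cfcHom (R := ℂ) hsa.isStarNormal
  have hφc : Continuous φ := cfcHom_continuous _
  refine ⟨φ.comp (ContinuousMap.compStarAlgHom' ℂ ℂ r), ?_, ?_, ?_⟩
  · have : ContinuousMap.compStarAlgHom' ℂ ℂ r ⟨fun s => (s : ℂ), Complex.continuous_ofReal⟩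
        = ContinuousMap.restrict (spectrum ℂ R) (ContinuousMap.id ℂ) := by
      ext x; exact hr x
    rw [StarAlgHom.comp_apply, this]
    exact cfcHom_id _
  · intro g C hC hg
    refine (NonUnitalStarAlgHom.norm_apply_le φ _).trans ?_
    rw [ContinuousMap.norm_le _ hC]
    exact fun x => hg _ (hr01 x)
  · intro f g hfg
    let _ : NormedAlgebra ℚ (H →L[ℂ] H) := .restrictScalars ℚ ℂ _
    let _ : NormedAlgebra ℚ C(spectrum ℂ R, ℂ) := .restrictScalars ℚ ℂ _
    rw [StarAlgHom.comp_apply, StarAlgHom.comp_apply, ← NormedSpace.map_exp φ hφc]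
    congr 1
    ext x
    have := NormedSpace.map_exp (ContinuousMap.evalStarAlgHom ℂ ℂ x) (continuous_eval_const x)
      (ContinuousMap.compStarAlgHom' ℂ ℂ r f)
    refine Eq.trans ?_ this.symm
    rw [← Complex.exp_eq_exp_ℂ]
    exact hfg _

end Calculus

/-! ### The modular flow -/

/-- `s ↦ √(s (2 - s))`, which vanishes outside `[0, 2]` because `√` of a negative number is `0`. -/
noncomputable def tmtTau : C(ℝ, ℂ) :=
  ⟨fun s => ((√(s * (2 - s)) : ℝ) : ℂ), by fun_prop⟩

/-- The logarithm of the modular function, `s ↦ log ((2 - s) / s)`, for `0 < s < 2`. -/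
noncomputable def tmtLog (s : ℝ) : ℝ := Real.log (2 - s) - Real.log s

/-- Although `tmtLog` is singular at `0` and `2`, the factor `tmtTau` vanishes there and the
exponential has modulus one. -/
lemma tmt_continuous_flow (t : ℝ) : Continuous fun s : ℝ =>
    tmtTau s * Complex.exp (-(Complex.I * t) * (tmtLog s : ℂ)) := by
  have hn : ∀ s, ‖tmtTau s * Complex.exp (-(Complex.I * t) * (tmtLog s : ℂ))‖ = ‖tmtTau s‖ := by
    intro s
    rw [norm_mul, Complex.norm_exp]
    simp
  rw [continuous_iff_continuousAt]
  intro s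
  by_cases hs : 0 < s ∧ s < 2
  · have : ContinuousAt tmtLog s := by
      unfold tmtLog
      exact ((continuousAt_const.sub continuousAt_id).log (by simp; linarith [hs.2])).sub
        (Real.continuousAt_log hs.1.ne')
    have h1 : ContinuousAt (fun s : ℝ => (tmtLog s : ℂ)) s :=
      Complex.continuous_ofReal.continuousAt.comp this
    exact (tmtTau.continuous.continuousAt).mul (Complex.continuous_exp.continuousAt.comp
      (continuousAt_const.mul h1))
  · have h0 : tmtTau s = 0 := by
      simp only [tmtTau, ContinuousMap.coe_mk, Complex.ofReal_eq_zero]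
      apply Real.sqrt_eq_zero_of_nonpos
      rcases not_and_or.1 hs with h | h
      · nlinarith
      · nlinarith
    rw [ContinuousAt, h0, zero_mul]
    refine squeeze_zero_norm (fun s => (hn s).le) ?_
    have := tmtTau.continuous.norm.tendsto s
    simpa [h0] using this

/-- `s ↦ √(s (2 - s)) * ((2 - s) / s) ^ (-i t)`. -/
noncomputable def tmtFlow (t : ℝ) : C(ℝ, ℂ) := ⟨_, tmt_continuous_flow t⟩

/-- A continuous function on `ℝ` that agrees with `tmtLog` on the set where `2 δ < s (2 - s)`. -/
noncomputable def tmtLogCut {δ : ℝ} (hδ : 0 < δ) : C(ℝ, ℂ) :=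
  ⟨fun s => ((Real.log (max (2 - s) δ) - Real.log (max s δ) : ℝ) : ℂ), by
    refine Complex.continuous_ofReal.comp (Continuous.sub ?_ ?_)
    · exact Continuous.log (by fun_prop) fun s => (lt_max_of_lt_right hδ).ne'
    · exact Continuous.log (by fun_prop) fun s => (lt_max_of_lt_right hδ).ne'⟩

/-- `s ↦ max 0 (s (2 - s) - 2 δ)`. -/
noncomputable def tmtCut (δ : ℝ) : C(ℝ, ℂ) :=
  ⟨fun s => ((max 0 (s * (2 - s) - 2 * δ) : ℝ) : ℂ), by fun_prop⟩

/-- `s ↦ exp (ζ * l s)`. -/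
noncomputable def tmtExp (l : C(ℝ, ℂ)) (ζ : ℂ) : C(ℝ, ℂ) :=
  ⟨fun s => Complex.exp (ζ * l s), by fun_prop⟩

lemma tmt_logCut_eq {δ : ℝ} (hδ : 0 < δ) {s : ℝ} (hs : s ∈ Set.Icc (0 : ℝ) 2)
    (h : tmtCut δ s ≠ 0) : 0 < s ∧ s < 2 ∧ tmtLogCut hδ s = tmtLog s := by
  obtain ⟨h0, h2⟩ := hs
  have h1 : 2 * δ < s * (2 - s) := by
    by_contra hh
    apply h
    simp only [tmtCut, ContinuousMap.coe_mk]
    rw [max_eq_left (by linarith)]; simp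
  have hs1 : δ < s := by nlinarith
  have hs2 : δ < 2 - s := by nlinarith
  refine ⟨by linarith, by linarith, ?_⟩
  simp only [tmtLogCut, ContinuousMap.coe_mk, tmtLog]
  rw [max_eq_left hs1.le, max_eq_left hs2.le]

/-- `√(s (2 - s)) ((2 - s) / s) ^ (∓ 1/2)` equals `s`, respectively `2 - s`. -/
lemma tmt_exp_log_div {s : ℝ} (h0 : 0 < s) (h2 : s < 2) :
    tmtTau s * Complex.exp (-(1 / 2 : ℂ) * tmtLog s) = s ∧
    tmtTau s * Complex.exp ((1 / 2 : ℂ) * tmtLog s) = 2 - s := by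
  have hs2 : 0 < 2 - s := by linarith
  have key : ∀ a b : ℝ, 0 < a → 0 < b →
      √(a * b) * Real.exp ((1 / 2) * (Real.log a - Real.log b)) = a := by
    intro a b ha hb
    rw [Real.sqrt_eq_rpow, Real.rpow_def_of_pos (mul_pos ha hb), ← Real.exp_add,
      Real.log_mul ha.ne' hb.ne']
    rw [show (Real.log a + Real.log b) * (1 / 2) + 1 / 2 * (Real.log a - Real.log b)
      = Real.log a by ring, Real.exp_log ha]
  constructor
  · have := key s (2 - s) h0 hs2
    rw [show (1 / 2 : ℝ) * (Real.log s - Real.log (2 - s)) = -(1 / 2) * tmtLog s by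
      unfold tmtLog; ring] at this
    have h := congrArg (fun x : ℝ => (x : ℂ)) this
    simp only [tmtTau, ContinuousMap.coe_mk]
    push_cast at h
    exact h
  · have := key (2 - s) s hs2 h0
    rw [show (1 / 2 : ℝ) * (Real.log (2 - s) - Real.log s) = (1 / 2) * tmtLog s by
      unfold tmtLog; ring, mul_comm (2 - s)] at this
    have h := congrArg (fun x : ℝ => (x : ℂ)) this
    simp only [tmtTau, ContinuousMap.coe_mk]
    push_cast at h
    exact h

section Flow
variable {H : Type*} [NormedAddCommGroup H] [InnerProductSpace ℂ H] [CompleteSpace H]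

lemma tmt_denseRange_of_injective {T : H →L[ℂ] H} (hT : IsSelfAdjoint T)
    (hinj : ∀ v, T v = 0 → v = 0) : DenseRange T := by
  have h := ContinuousLinearMap.orthogonal_range T
  rw [ContinuousLinearMap.isSelfAdjoint_iff'.1 hT] at h
  have hk : (T : H →ₗ[ℂ] H).ker = ⊥ := by
    rw [LinearMap.ker_eq_bot']; exact hinj
  rw [hk, ← Submodule.topologicalClosure_eq_top_iff,
    ← Submodule.dense_iff_topologicalClosure_eq_top] at h
  exact h

/-- The vector `p` is entire analytic for the flow `u`. The operators `E ζ = exp (ζ l)` agree with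
`((2 - R) / R) ^ ζ` on a spectral subspace of `R` that contains `p` and the vector `a` with
`p = T a`; here `l` is a bounded self-adjoint operator, and `M` bounds `E` on `|Re ζ| ≤ 1/2`. The
last three fields express `u t`, `R` and `2 - R` on the orbit of `p` through `E`. -/
structure TmtAnalytic (R T : H →L[ℂ] H) (u : ℝ → H →L[ℂ] H) (p : H) where
  E : ℂ → H →L[ℂ] H
  a : H
  M : ℝ
  diff : Differentiable ℂ E
  star_E : ∀ ζ, star (E ζ) = E (starRingEnd ℂ ζ)
  zero_E : E 0 = 1
  norm_E : ∀ ζ : ℂ, |ζ.re| ≤ 1 / 2 → ‖E ζ‖ ≤ M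
  flow : ∀ t : ℝ, u t p = T (E (-(Complex.I * t)) a)
  left : ∀ t : ℝ, R (E (-(Complex.I * t)) a) = E (-(Complex.I * t) - 1 / 2) p
  right : ∀ t : ℝ, (2 - R) (E (-(Complex.I * t)) a) = E (-(Complex.I * t) + 1 / 2) p

/-- The positive square root `T` of `R (2 - R)` and the isometric flow `((2 - R) / R) ^ (-i t)`. The
function `((2 - s) / s) ^ (-i t)` is not continuous on `[0, 2]`, but its product with `√(s (2 - s))`
is; so `u t` is defined by `u t (T v) = tmtFlow t (R) v` and extended by continuity. -/
lemma tmt_exists_flow (R : H →L[ℂ] H) (h0 : 0 ≤ R) (h2 : R ≤ 2) (hR : ∀ v, R v = 0 → v = 0)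
    (hR2 : ∀ v, (2 - R) v = 0 → v = 0) :
    ∃ (T : H →L[ℂ] H) (u : ℝ → H →L[ℂ] H), 0 ≤ T ∧ T * T = R * (2 - R) ∧ DenseRange T ∧
      u 0 = 1 ∧ (∀ t v, ‖u t v‖ = ‖v‖) ∧ (∀ v, Continuous fun t => u t v) ∧
      Dense {p | Nonempty (TmtAnalytic R T u p)} := by
  obtain ⟨Φ, hΦR, hΦn, hΦe⟩ := tmt_calculus R h0 h2
  have hcongr : ∀ f g : C(ℝ, ℂ), (∀ s ∈ Set.Icc (0 : ℝ) 2, f s = g s) → Φ f = Φ g := by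
    intro f g h
    rw [← sub_eq_zero, ← map_sub, ← norm_le_zero_iff]
    exact hΦn _ 0 le_rfl fun s hs => by simp [h s hs]
  set T := Φ tmtTau with hTdef
  have hτsq : ∀ s ∈ Set.Icc (0 : ℝ) 2, tmtTau s * tmtTau s = s * (2 - s) := by
    intro s hs
    simp only [tmtTau, ContinuousMap.coe_mk]
    rw [← Complex.ofReal_mul, Real.mul_self_sqrt (mul_nonneg hs.1 (by linarith [hs.2]))]
    push_cast; ring
  have hTT : T * T = R * (2 - R) := by
    rw [hTdef, ← map_mul, ← hΦR, ← map_ofNat Φ 2, ← map_sub, ← map_mul]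
    exact hcongr _ _ fun s hs => hτsq s hs
  have hstar : ∀ f g : C(ℝ, ℂ), (∀ s ∈ Set.Icc (0 : ℝ) 2, starRingEnd ℂ (f s) = g s) →
      star (Φ f) = Φ g := fun f g h => by
    rw [← map_star]; exact hcongr _ _ h
  have hT0 : 0 ≤ T := by
    have : T = star (Φ ⟨fun s => ((√(√(s * (2 - s))) : ℝ) : ℂ), by fun_prop⟩) *
        Φ ⟨fun s => ((√(√(s * (2 - s))) : ℝ) : ℂ), by fun_prop⟩ := by
      rw [hstar _ ⟨fun s => ((√(√(s * (2 - s))) : ℝ) : ℂ), by fun_prop⟩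
        (fun s _ => Complex.conj_ofReal _), ← map_mul]
      refine hcongr _ _ fun s hs => ?_
      simp only [tmtTau, ContinuousMap.coe_mk, ContinuousMap.mul_apply]
      rw [← Complex.ofReal_mul, Real.mul_self_sqrt (Real.sqrt_nonneg _)]
    rw [this]; exact star_mul_self_nonneg _
  have hTsa : IsSelfAdjoint T := IsSelfAdjoint.of_nonneg hT0
  have hTinj : ∀ v, T v = 0 → v = 0 := by
    intro v hv
    apply hR2; apply hR
    have : (R * (2 - R)) v = 0 := by rw [← hTT]; simp [hv]
    exact this
  have hTd := tmt_denseRange_of_injective hTsa hTinj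
  -- `|tmtFlow t| = |tmtTau|`, hence `T v ↦ tmtFlow t (R) v` is isometric.
  have hflow_norm : ∀ t v, ‖Φ (tmtFlow t) v‖ = ‖T v‖ := by
    intro t v
    have h1 : star (Φ (tmtFlow t)) * Φ (tmtFlow t) = star T * T := by
      rw [hTdef, ← map_star, ← map_star, ← map_mul, ← map_mul]
      refine hcongr _ _ fun s hs => ?_
      simp only [ContinuousMap.mul_apply, ContinuousMap.star_apply, tmtFlow, ContinuousMap.coe_mk]
      rw [star_mul, show star (Complex.exp (-(Complex.I * t) * (tmtLog s : ℂ)))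
        = Complex.exp ((Complex.I * t) * (tmtLog s : ℂ)) by
          rw [← starRingEnd_apply, ← Complex.exp_conj]; simp]
      have : Complex.exp ((Complex.I * t) * (tmtLog s : ℂ)) *
        Complex.exp (-(Complex.I * t) * (tmtLog s : ℂ)) = 1 := by
          rw [← Complex.exp_add]; simp
      linear_combination (star (tmtTau s) * tmtTau s) * this
    rw [ContinuousLinearMap.apply_norm_eq_sqrt_inner_adjoint_left,
      ContinuousLinearMap.apply_norm_eq_sqrt_inner_adjoint_left]
    simp only [ContinuousLinearMap.star_eq_adjoint] at h1
    have h1' : (ContinuousLinearMap.adjoint (Φ (tmtFlow t))) ∘SL (Φ (tmtFlow t))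
      = (ContinuousLinearMap.adjoint T) ∘SL T := h1
    rw [h1']
  set u : ℝ → H →L[ℂ] H := fun t =>
    LinearMap.extendOfNorm (Φ (tmtFlow t) : H →ₗ[ℂ] H) (T : H →ₗ[ℂ] H) with hu
  have huT : ∀ t v, u t (T v) = Φ (tmtFlow t) v := fun t v =>
    LinearMap.extendOfNorm_eq (f := (Φ (tmtFlow t) : H →ₗ[ℂ] H)) (e := (T : H →ₗ[ℂ] H)) hTd
      ⟨1, fun x => by rw [one_mul]; exact (hflow_norm t x).le⟩ v
  have hunorm : ∀ t v, ‖u t v‖ = ‖v‖ := by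
    intro t v
    have := hTd.equalizer (g := fun v => ‖u t v‖) (h := fun v => ‖v‖) (by fun_prop) (by fun_prop)
      (by ext v; simp only [Function.comp]; rw [huT, hflow_norm])
    exact congrFun this v
  have hu0 : u 0 = 1 := by
    have h : ∀ v, Φ (tmtFlow 0) v = T v := by
      intro v
      rw [hcongr (tmtFlow 0) tmtTau fun s _ => by simp [tmtFlow]]
    have := hTd.equalizer (g := fun v => u 0 v) (h := fun v => v) (by fun_prop) (by fun_prop)
      (by ext v; simp only [Function.comp]; rw [huT, h])
    ext v; exact congrFun this v
  -- Vectors cut down to the spectral subspace where `s (2 - s) > 2 δ` are analytic.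
  have han : ∀ δ > 0, ∀ p0 : H, Nonempty (TmtAnalytic R T u (T (Φ (tmtCut δ) p0))) := by
    intro δ hδ p0
    set l := tmtLogCut hδ with hl
    have hEexp : ∀ ζ : ℂ, Φ (tmtExp l ζ) = NormedSpace.exp (ζ • Φ l) := by
      intro ζ
      rw [← map_smul]
      exact hΦe _ _ fun s => rfl
    obtain ⟨M, hM⟩ := isCompact_Icc.exists_bound_of_continuousOn
      (l.continuous.continuousOn (s := Set.Icc (0 : ℝ) 2))
    have hM0 : 0 ≤ M := (norm_nonneg _).trans (hM 0 (by simp))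
    have hlre : ∀ s, l s = ((l s).re : ℂ) := fun s => by
      simp [hl, tmtLogCut]
    have hmul : ∀ (f g : C(ℝ, ℂ)) v, Φ f (Φ g v) = Φ (f * g) v := fun f g v => by
      rw [map_mul]; rfl
    have hpt : ∀ f g : C(ℝ, ℂ), (∀ s, 0 < s → s < 2 → l s = tmtLog s → f s = g s) →
        ∀ s ∈ Set.Icc (0 : ℝ) 2, f s * tmtCut δ s = g s * tmtCut δ s := by
      intro f g h s hs
      by_cases hc : tmtCut δ s = 0
      · simp [hc]
      · obtain ⟨a1, a2, a3⟩ := tmt_logCut_eq hδ hs hc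
        rw [h s a1 a2 a3]
    have hcut : ∀ f g : C(ℝ, ℂ), (∀ s, 0 < s → s < 2 → l s = tmtLog s → f s = g s) →
        ∀ v, Φ f (Φ (tmtCut δ) v) = Φ g (Φ (tmtCut δ) v) := by
      intro f g h v
      rw [hmul, hmul, hcongr (f * tmtCut δ) (g * tmtCut δ) (hpt f g h)]
    refine ⟨⟨fun ζ => Φ (tmtExp l ζ), Φ (tmtCut δ) p0, Real.exp (1 / 2 * M), ?_, ?_, ?_, ?_, ?_,
      ?_, ?_⟩⟩
    · intro ζ
      simp only [hEexp]
      exact (hasDerivAt_exp_smul_const (Φ l) ζ).differentiableAt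
    · intro ζ
      refine hstar _ _ fun s _ => ?_
      simp only [tmtExp, ContinuousMap.coe_mk]
      rw [← Complex.exp_conj, map_mul, hlre s, Complex.conj_ofReal]
    · rw [← map_one Φ]
      refine hcongr _ _ fun s _ => ?_
      simp [tmtExp]
    · intro ζ hζ
      refine hΦn _ _ (Real.exp_pos _).le fun s hs => ?_
      simp only [tmtExp, ContinuousMap.coe_mk]
      rw [Complex.norm_exp, hlre s, Complex.re_mul_ofReal]
      refine Real.exp_le_exp.2 ((le_abs_self _).trans ?_)
      rw [abs_mul]
      have := (Complex.abs_re_le_norm _).trans (hM s hs)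
      exact mul_le_mul hζ this (abs_nonneg _) (by norm_num)
    · intro t
      rw [huT, hTdef, hmul tmtTau]
      refine hcut _ _ (fun s h1 h2 h3 => ?_) p0
      simp only [tmtExp, ContinuousMap.coe_mk, ContinuousMap.mul_apply, tmtFlow, h3]
    · intro t
      rw [← hΦR, hTdef, hmul _ (tmtExp l (-(Complex.I * t))), hmul _ tmtTau]
      refine hcut _ _ (fun s h1 h2 h3 => ?_) p0
      simp only [tmtExp, ContinuousMap.coe_mk, ContinuousMap.mul_apply, h3]
      rw [sub_eq_add_neg, add_mul, Complex.exp_add]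
      linear_combination -Complex.exp (-(Complex.I * t) * tmtLog s) * (tmt_exp_log_div h1 h2).1
    · intro t
      rw [← hΦR, hTdef, ← map_ofNat Φ 2, ← map_sub, hmul _ (tmtExp l (-(Complex.I * t))),
        hmul _ tmtTau]
      refine hcut _ _ (fun s h1 h2 h3 => ?_) p0
      simp only [tmtExp, ContinuousMap.coe_mk, ContinuousMap.mul_apply, ContinuousMap.sub_apply, h3]
      rw [add_mul, Complex.exp_add]
      rw [show (2 : C(ℝ, ℂ)) s = 2 from rfl]
      linear_combination -Complex.exp (-(Complex.I * t) * tmtLog s) * (tmt_exp_log_div h1 h2).2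
  -- As `δ → 0` the cut-offs tend uniformly to `s (2 - s)`, the square of `tmtTau`.
  have hdense : Dense {p | Nonempty (TmtAnalytic R T u p)} := by
    have hT3 : DenseRange fun v => T (T (T v)) :=
      hTd.comp (hTd.comp hTd T.continuous) T.continuous
    refine (dense_closure (s := {p | Nonempty (TmtAnalytic R T u p)})).1 ?_
    refine hT3.mono ?_
    rintro _ ⟨v, rfl⟩
    have hlim : Tendsto (fun n : ℕ => T (Φ (tmtCut (1 / ((n : ℝ) + 1))) v)) atTop
        (𝓝 (T (T (T v)))) := by
      refine (T.continuous.tendsto _).comp ?_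
      have hop : Tendsto (fun n : ℕ => Φ (tmtCut (1 / ((n : ℝ) + 1)))) atTop (𝓝 (T * T)) := by
        rw [tendsto_iff_norm_sub_tendsto_zero]
        refine squeeze_zero (fun _ => norm_nonneg _) (g := fun n : ℕ => 2 * (1 / ((n : ℝ) + 1)))
          (fun n => ?_) ?_
        · have hn : 0 ≤ 1 / ((n : ℝ) + 1) := by positivity
          rw [hTdef, ← map_mul, ← map_sub]
          refine hΦn _ _ (by positivity) fun s hs => ?_
          simp only [ContinuousMap.sub_apply, ContinuousMap.mul_apply]
          rw [hτsq s hs]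
          simp only [tmtCut, ContinuousMap.coe_mk]
          rw [show (s : ℂ) * (2 - s) = ((s * (2 - s) : ℝ) : ℂ) by push_cast; ring,
            ← Complex.ofReal_sub, Complex.norm_real, Real.norm_eq_abs, abs_le]
          have : 0 ≤ s * (2 - s) := mul_nonneg hs.1 (by linarith [hs.2])
          constructor
          · linarith [le_max_right 0 (s * (2 - s) - 2 * (1 / ((n : ℝ) + 1)))]
          · have := max_le this (by linarith : s * (2 - s) - 2 * (1 / ((n : ℝ) + 1)) ≤ s * (2 - s))
            linarith
        · simpa using (tendsto_one_div_add_atTop_nhds_zero_nat (𝕜 := ℝ)).const_mul 2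
      exact ((ContinuousLinearMap.apply ℂ H v).continuous.tendsto _).comp hop
    refine mem_closure_of_tendsto hlim (Eventually.of_forall fun n => han _ (by positivity) v)
  refine ⟨T, u, hT0, hTT, hTd, hu0, hunorm, ?_, hdense⟩
  intro v
  -- The orbit of `v` is a uniform limit of the continuous orbits of analytic vectors.
  have hcts : ∀ p, Nonempty (TmtAnalytic R T u p) → Continuous fun t => u t p := by
    rintro p ⟨hp⟩
    simp only [hp.flow]
    have := hp.diff.continuous
    have h1 : Continuous fun t : ℝ => hp.E (-(Complex.I * t)) := this.comp (by fun_prop)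
    fun_prop
  refine continuous_of_uniform_approx_of_continuous fun V hV => ?_
  obtain ⟨ε, hε, hεV⟩ := Metric.mem_uniformity_dist.1 hV
  obtain ⟨p, hpv, hp⟩ := Metric.dense_iff.1 hdense v ε hε
  refine ⟨fun t => u t p, hcts p hp, fun t => hεV ?_⟩
  rw [dist_eq_norm, ← map_sub, hunorm, ← dist_eq_norm, dist_comm]
  exact hpv

end Flow

/-! ### Flow averages -/

section FlowIntegral
variable {H : Type*} [NormedAddCommGroup H] [InnerProductSpace ℂ H] [CompleteSpace H]

/-- For analytic vectors `p` and `q`, the integral is the strip integral of the entire function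
`F z = exp (θ z) ⟪q, Δ^(i z) h Δ^(-i z) p⟫` with `Δ = (2 - R) / R`: the identity `hkey` says that the
sum of the boundary values of `F` at `t ± i/2` is `exp (θ t) ⟪u t q, y (u t p)⟫`. -/
lemma tmt_flow_integral_analytic {R T : H →L[ℂ] H} {u : ℝ → H →L[ℂ] H}
    (y h : H →L[ℂ] H) {θ : ℝ} (hθ : |θ| < Real.pi)
    (hkey : ∀ a b : H, inner ℂ (T b) (y (T a)) =
      Complex.exp (-(Complex.I * θ / 2)) * inner ℂ ((2 - R) b) (h (R a)) +
      Complex.exp (Complex.I * θ / 2) * inner ℂ (R b) (h ((2 - R) a)))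
    {p q : H} (hp : TmtAnalytic R T u p) (hq : TmtAnalytic R T u q) :
    ∫ t : ℝ, (((Real.cosh (Real.pi * t))⁻¹ : ℝ) : ℂ) *
        ((Real.exp (θ * t) : ℝ) * inner ℂ (u t q) (y (u t p))) =
      ((2 * ∫ t : ℝ, (Real.cosh (Real.pi * t))⁻¹ : ℝ) : ℂ) * inner ℂ q (h p) := by
  set F : ℂ → ℂ := fun z => Complex.exp (θ * z) *
    inner ℂ q (hq.E (Complex.I * z) (h (hp.E (-(Complex.I * z)) p))) with hF
  have hFd : Differentiable ℂ F := by
    have d1 : Differentiable ℂ fun z : ℂ => hp.E (-(Complex.I * z)) :=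
      hp.diff.comp (f := fun z : ℂ => -(Complex.I * z)) (by fun_prop)
    have d2 : Differentiable ℂ fun z : ℂ => hq.E (Complex.I * z) :=
      hq.diff.comp (f := fun z : ℂ => Complex.I * z) (by fun_prop)
    have d3 : Differentiable ℂ fun z : ℂ => h (hp.E (-(Complex.I * z)) p) :=
      h.differentiable.comp (d1.clm_apply (differentiable_const p))
    exact (Complex.differentiable_exp.comp (by fun_prop)).mul
      ((innerSL ℂ q).differentiable.comp (d2.clm_apply d3))
  have hFb : ∀ z : ℂ, |z.im| ≤ 1 / 2 →
      ‖F z‖ ≤ (‖q‖ * (hq.M * (‖h‖ * (hp.M * ‖p‖)))) * Real.exp (|θ| * |z.re|) := by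
    intro z hz
    have e1 : ‖Complex.exp (θ * z)‖ ≤ Real.exp (|θ| * |z.re|) := by
      rw [Complex.norm_exp, Complex.re_ofReal_mul, ← abs_mul]
      exact Real.exp_le_exp.2 (le_abs_self _)
    have e2 := hp.norm_E (-(Complex.I * z)) (by simpa using hz)
    have e3 := hq.norm_E (Complex.I * z) (by simpa using hz)
    have hq0 : 0 ≤ hq.M := (norm_nonneg _).trans e3
    have hp0 : 0 ≤ hp.M := (norm_nonneg _).trans e2
    rw [hF, norm_mul, mul_comm]
    refine mul_le_mul ?_ e1 (norm_nonneg _) (by positivity)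
    refine (norm_inner_le_norm _ _).trans ?_
    gcongr
    refine (ContinuousLinearMap.le_of_opNorm_le _ e3 _).trans ?_
    gcongr
    refine (ContinuousLinearMap.le_opNorm _ _).trans ?_
    gcongr
    exact ContinuousLinearMap.le_of_opNorm_le _ e2 _
  have hmain := tmt_strip_integral F hFd (abs_nonneg θ) hθ hFb
  have hF0 : F 0 = inner ℂ q (h p) := by simp [hF, hp.zero_E, hq.zero_E]
  rw [hF0] at hmain
  rw [← hmain]
  congr 1; ext t; congr 1
  have hstar : ∀ (ζ : ℂ) (x : H), inner ℂ q (hq.E ζ x) =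
      inner ℂ (hq.E (starRingEnd ℂ ζ) q) x := by
    intro ζ x
    rw [← hq.star_E, ContinuousLinearMap.star_eq_adjoint, ContinuousLinearMap.adjoint_inner_left]
  have c1 : starRingEnd ℂ (Complex.I * (t - Complex.I / 2)) = -(Complex.I * t) + 1 / 2 := by
    simp only [map_mul, map_sub, map_div₀, Complex.conj_I, Complex.conj_ofReal, map_ofNat]
    linear_combination (1 / 2 : ℂ) * -Complex.I_mul_I
  have c2 : starRingEnd ℂ (Complex.I * (t + Complex.I / 2)) = -(Complex.I * t) - 1 / 2 := by
    simp only [map_mul, map_add, map_div₀, Complex.conj_I, Complex.conj_ofReal, map_ofNat]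
    linear_combination (1 / 2 : ℂ) * Complex.I_mul_I
  have c3 : -(Complex.I * (t - Complex.I / 2)) = -(Complex.I * t) - 1 / 2 := by
    linear_combination (1 / 2 : ℂ) * Complex.I_mul_I
  have c4 : -(Complex.I * (t + Complex.I / 2)) = -(Complex.I * t) + 1 / 2 := by
    linear_combination (1 / 2 : ℂ) * -Complex.I_mul_I
  simp only [hF]
  rw [hp.flow, hq.flow, hkey, hp.left, hp.right, hq.left, hq.right, hstar, hstar, c1, c2, c3, c4,
    mul_add, ← mul_assoc, ← mul_assoc, Complex.ofReal_exp, ← Complex.exp_add, ← Complex.exp_add]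
  congr 3
  · push_cast; ring
  · push_cast; ring

/-- The flow average of `y` against `exp (θ t) / cosh (π t)` is a multiple of `h`, whenever `y`
and `h` are related by the Radon–Nikodym identity with `λ = exp (-i θ / 2)`. -/
lemma tmt_flow_integral {R T : H →L[ℂ] H} {u : ℝ → H →L[ℂ] H}
    (hunorm : ∀ t v, ‖u t v‖ = ‖v‖) (hucont : ∀ v, Continuous fun t => u t v)
    (hdense : Dense {p | Nonempty (TmtAnalytic R T u p)})
    (y h : H →L[ℂ] H) {θ : ℝ} (hθ : |θ| < Real.pi)
    (hkey : ∀ a b : H, inner ℂ (T b) (y (T a)) =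
      Complex.exp (-(Complex.I * θ / 2)) * inner ℂ ((2 - R) b) (h (R a)) +
      Complex.exp (Complex.I * θ / 2) * inner ℂ (R b) (h ((2 - R) a))) (p q : H) :
    ∫ t : ℝ, (((Real.cosh (Real.pi * t))⁻¹ : ℝ) : ℂ) *
        ((Real.exp (θ * t) : ℝ) * inner ℂ (u t q) (y (u t p))) =
      ((2 * ∫ t : ℝ, (Real.cosh (Real.pi * t))⁻¹ : ℝ) : ℂ) * inner ℂ q (h p) := by
  obtain ⟨P, hP, hPp⟩ := mem_closure_iff_seq_limit.1 (hdense p)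
  obtain ⟨Q, hQ, hQq⟩ := mem_closure_iff_seq_limit.1 (hdense q)
  obtain ⟨CP, hCP⟩ := (Metric.isBounded_range_of_tendsto P hPp).exists_norm_le
  obtain ⟨CQ, hCQ⟩ := (Metric.isBounded_range_of_tendsto Q hQq).exists_norm_le
  have hCP' : ∀ n, ‖P n‖ ≤ CP := fun n => hCP _ ⟨n, rfl⟩
  have hCQ' : ∀ n, ‖Q n‖ ≤ CQ := fun n => hCQ _ ⟨n, rfl⟩
  have hCP0 : 0 ≤ CP := (norm_nonneg _).trans (hCP' 0)
  have hCQ0 : 0 ≤ CQ := (norm_nonneg _).trans (hCQ' 0)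
  have hexp : ∀ t : ℝ, Real.exp (θ * t) ≤ Real.exp (|θ| * |t|) := fun t =>
    Real.exp_le_exp.2 ((le_abs_self _).trans (abs_mul _ _).le)
  have hcont : ∀ p q : H, Continuous fun t : ℝ => (((Real.cosh (Real.pi * t))⁻¹ : ℝ) : ℂ) *
        ((Real.exp (θ * t) : ℝ) * inner ℂ (u t q) (y (u t p))) := by
    intro p q
    have h1 := Complex.continuous_ofReal.comp tmt_continuous_sech
    have h2 := hucont p
    have h3 := hucont q
    exact h1.mul (Continuous.mul (by fun_prop) (by fun_prop))
  have hbound : Integrable (fun t : ℝ => (Real.cosh (Real.pi * t))⁻¹ *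
      (Real.exp (|θ| * |t|) * (CQ * (‖y‖ * CP)))) := by
    have := (tmt_integrable_of_bound (f := fun t : ℝ =>
      ((Real.exp (|θ| * |t|) * (CQ * (‖y‖ * CP)) : ℝ) : ℂ)) (C := CQ * (‖y‖ * CP)) (θ := |θ|)
      (by fun_prop) hθ (fun t => by
        rw [Complex.norm_real, Real.norm_of_nonneg (by positivity), mul_comm])).norm
    refine this.congr (Eventually.of_forall fun t => ?_)
    simp only
    rw [← Complex.ofReal_mul, Complex.norm_real, Real.norm_of_nonneg]
    have := Real.cosh_pos (Real.pi * t)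
    positivity
  have hlim := tendsto_integral_of_dominated_convergence
    (F := fun n t => (((Real.cosh (Real.pi * t))⁻¹ : ℝ) : ℂ) *
        ((Real.exp (θ * t) : ℝ) * inner ℂ (u t (Q n)) (y (u t (P n)))))
    (f := fun t => (((Real.cosh (Real.pi * t))⁻¹ : ℝ) : ℂ) *
        ((Real.exp (θ * t) : ℝ) * inner ℂ (u t q) (y (u t p)))) (μ := volume) _
    (fun n => (hcont _ _).aestronglyMeasurable) hbound
    (fun n => Eventually.of_forall fun t => by
      rw [norm_mul, norm_mul, Complex.norm_real, Complex.norm_real,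
        Real.norm_of_nonneg (Real.exp_pos _).le,
        Real.norm_of_nonneg (inv_nonneg.2 (Real.cosh_pos _).le)]
      have := Real.cosh_pos (Real.pi * t)
      refine mul_le_mul_of_nonneg_left (mul_le_mul (hexp t) ?_ (norm_nonneg _)
        (Real.exp_pos _).le) (inv_nonneg.2 this.le)
      refine (norm_inner_le_norm _ _).trans ?_
      rw [hunorm]
      gcongr
      · exact hCQ' n
      · refine (y.le_opNorm _).trans ?_
        rw [hunorm]
        gcongr
        exact hCP' n)
    (Eventually.of_forall fun t => by
      refine tendsto_const_nhds.mul (tendsto_const_nhds.mul (Tendsto.inner ?_ ?_))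
      · exact ((u t).continuous.tendsto _).comp hQq
      · exact (y.continuous.tendsto _).comp (((u t).continuous.tendsto _).comp hPp))
  refine tendsto_nhds_unique hlim ?_
  have : ∀ n, ∫ t : ℝ, (((Real.cosh (Real.pi * t))⁻¹ : ℝ) : ℂ) *
        ((Real.exp (θ * t) : ℝ) * inner ℂ (u t (Q n)) (y (u t (P n)))) =
      ((2 * ∫ t : ℝ, (Real.cosh (Real.pi * t))⁻¹ : ℝ) : ℂ) * inner ℂ (Q n) (h (P n)) := fun n => by
    obtain ⟨hp⟩ := hP n
    obtain ⟨hq⟩ := hQ n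
    exact tmt_flow_integral_analytic y h hθ hkey hp hq
  simp only [this]
  exact tendsto_const_nhds.mul (hQq.inner ((h.continuous.tendsto _).comp hPp))

/-- If the operators `h` of the Radon–Nikodym identities, one for each `θ`, commute with `z`, then
so does `y`: the matrix coefficient of `u t* y u t z - z u t* y u t`, multiplied by `1 / cosh (π t)`,
has vanishing Laplace transform on `(-π, π)`, so it vanishes, in particular at `t = 0`. -/
lemma tmt_commute_of_family {R T : H →L[ℂ] H} {u : ℝ → H →L[ℂ] H} (hu0 : u 0 = 1)
    (hunorm : ∀ t v, ‖u t v‖ = ‖v‖) (hucont : ∀ v, Continuous fun t => u t v)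
    (hdense : Dense {p | Nonempty (TmtAnalytic R T u p)})
    (y z : H →L[ℂ] H)
    (hh : ∀ θ : ℝ, |θ| < Real.pi → ∃ h : H →L[ℂ] H, (∀ v, h (z v) = z (h v)) ∧
      ∀ a b : H, inner ℂ (T b) (y (T a)) =
        Complex.exp (-(Complex.I * θ / 2)) * inner ℂ ((2 - R) b) (h (R a)) +
        Complex.exp (Complex.I * θ / 2) * inner ℂ (R b) (h ((2 - R) a))) (v : H) :
    y (z v) = z (y v) := by
  refine ext_inner_left ℂ fun w => ?_
  have hbd : ∀ p q t, ‖inner ℂ (u t q) (y (u t p))‖ ≤ ‖q‖ * (‖y‖ * ‖p‖) := by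
    intro p q t
    refine (norm_inner_le_norm _ _).trans ?_
    rw [hunorm]
    gcongr
    refine (y.le_opNorm _).trans ?_
    rw [hunorm]
  have hc : ∀ p q, Continuous fun t => inner ℂ (u t q) (y (u t p)) := by
    intro p q
    have h2 := hucont p
    have h3 := hucont q
    fun_prop
  have hi : ∀ (p q : H) (θ : ℝ), |θ| < Real.pi → Integrable
      fun t : ℝ => (((Real.cosh (Real.pi * t))⁻¹ : ℝ) : ℂ) *
        ((Real.exp (θ * t) : ℝ) * inner ℂ (u t q) (y (u t p))) := by
    intro p q θ hθ
    have := hc p q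
    refine tmt_integrable_of_bound (C := ‖q‖ * (‖y‖ * ‖p‖)) (θ := |θ|) (by fun_prop) hθ fun t => ?_
    rw [norm_mul, Complex.norm_real, Real.norm_of_nonneg (Real.exp_pos _).le, mul_comm]
    exact mul_le_mul (hbd p q t) (Real.exp_le_exp.2 ((le_abs_self _).trans (abs_mul _ _).le))
      (Real.exp_pos _).le (by positivity)
  have hmain := tmt_unique
    (fun t => inner ℂ (u t w) (y (u t (z v))) -
      inner ℂ (u t (ContinuousLinearMap.adjoint z w)) (y (u t v)))
    ((hc _ _).sub (hc _ _))
    (fun t => (norm_sub_le _ _).trans (add_le_add (hbd _ _ t) (hbd _ _ t))) (fun θ hθ => by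
      obtain ⟨h, hz, hkey⟩ := hh θ hθ
      have e1 := tmt_flow_integral hunorm hucont hdense y h hθ hkey (z v) w
      have e2 := tmt_flow_integral hunorm hucont hdense y h hθ hkey v
        (ContinuousLinearMap.adjoint z w)
      rw [ContinuousLinearMap.adjoint_inner_left, ← hz, ← e1] at e2
      rw [← sub_eq_zero.2 e2.symm, ← integral_sub (hi _ _ θ hθ) (hi _ _ θ hθ)]
      congr 1; ext t; ring) 0
  simp only [hu0, one_apply_eq_self] at hmain
  rw [sub_eq_zero.1 hmain, ContinuousLinearMap.adjoint_inner_left]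

end FlowIntegral

/-! ### Real subspaces and polar decomposition -/

section RealSubspace

variable {H : Type*} [NormedAddCommGroup H] [InnerProductSpace ℂ H]

/-- Two functionals compatible with multiplication by `i` and with the same real part agree. -/
lemma tmt_complex_ext {F G : H → ℂ} (hF : ∀ w, F (Complex.I • w) = Complex.I * F w)
    (hG : ∀ w, G (Complex.I • w) = Complex.I * G w) (h : ∀ w, (F w).re = (G w).re) (w : H) :
    F w = G w := by
  refine Complex.ext (h w) ?_
  have := h (Complex.I • w)
  rw [hF, hG, Complex.I_mul_re, Complex.I_mul_re] at this
  exact neg_injective this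

/-- A conjugate-linear isometry reverses inner products. -/
lemma tmt_inner_conj (J : H ≃ₗᵢ⋆[ℂ] H) (u v : H) : inner ℂ (J u) (J v) = inner ℂ v u := by
  refine tmt_complex_ext (F := fun u => inner ℂ (J u) (J v)) (G := fun u => inner ℂ v u)
    (fun w => ?_) (fun w => ?_) (fun w => ?_) u
  · rw [LinearIsometryEquiv.map_smulₛₗ, inner_smul_left]; simp
  · rw [inner_smul_right]
  · have h1 := norm_add_sq (𝕜 := ℂ) (J w) (J v)
    have h2 := norm_add_sq (𝕜 := ℂ) v w
    rw [← map_add, J.norm_map, J.norm_map, J.norm_map] at h1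
    rw [add_comm w v] at h1
    have h3 : RCLike.re (inner ℂ (J w) (J v)) = RCLike.re (inner ℂ v w) := by linarith
    exact h3

variable [CompleteSpace H]

/-- The projection onto a closed real subspace, orthogonal for the real inner product `Re ⟪·,·⟫`. -/
lemma tmt_exists_proj (K : Submodule ℝ H) (hK : IsClosed (K : Set H)) :
    ∃ P : H →L[ℝ] H, (∀ v, P v ∈ K) ∧ ∀ v, ∀ k ∈ K, (inner ℂ k (v - P v)).re = 0 := by
  let _ : InnerProductSpace ℝ H := InnerProductSpace.rclikeToReal ℂ H
  have : CompleteSpace K := hK.completeSpace_coe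
  have : K.HasOrthogonalProjection := inferInstance
  refine ⟨K.starProjection, fun v => K.starProjection_apply_mem v, fun v k hk => ?_⟩
  have := K.sub_starProjection_mem_orthogonal v k hk
  rwa [real_inner_eq_re_inner ℂ] at this

/-- Polar decomposition of an injective symmetric conjugate-linear operator: its phase is an
involution `J`. Both `J T J⁻¹` and `T` are positive square roots of `S²`, so `J` commutes
with `T`, and symmetry of `S` then gives `J = J⁻¹`. -/
lemma tmt_polar (T : H →L[ℂ] H) (S : H →L⋆[ℂ] H) (hT : 0 ≤ T) (hTd : DenseRange T)
    (hS : ∀ v w, inner ℂ (S v) w = inner ℂ (S w) v) (hST : ∀ v, S (S v) = T (T v)) :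
    ∃ J : H ≃ₗᵢ⋆[ℂ] H, (∀ v, J (T v) = S v) ∧ ∀ v, J (J v) = v := by
  have hTp := (ContinuousLinearMap.nonneg_iff_isPositive T).1 hT
  have hTs := hTp.inner_left_eq_inner_right
  have hnorm : ∀ v, ‖S v‖ = ‖T v‖ := by
    intro v
    have h1 : inner ℂ (S v) (S v) = inner ℂ (T v) (T v) := by
      rw [hS, hST, hTs]
    rw [inner_self_eq_norm_sq_to_K, inner_self_eq_norm_sq_to_K] at h1
    have h2 : ‖S v‖ ^ 2 = ‖T v‖ ^ 2 := by exact_mod_cast h1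
    exact (sq_eq_sq₀ (norm_nonneg _) (norm_nonneg _)).1 h2
  have hSd : DenseRange S := by
    have : DenseRange fun v => T (T v) := hTd.comp hTd T.continuous
    refine this.mono ?_
    rintro _ ⟨v, rfl⟩
    exact ⟨S v, hST v⟩
  let J₀ : H →L⋆[ℂ] H := (S : H →ₗ⋆[ℂ] H).extendOfNorm (T : H →ₗ[ℂ] H)
  have hJT : ∀ v, J₀ (T v) = S v :=
    LinearMap.extendOfNorm_eq (f := (S : H →ₗ⋆[ℂ] H)) (e := (T : H →ₗ[ℂ] H)) hTd
      ⟨1, fun v => by rw [one_mul]; exact (hnorm v).le⟩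
  have hJn : ∀ v, ‖J₀ v‖ = ‖v‖ := fun v => congrFun
    (hTd.equalizer (g := fun v => ‖J₀ v‖) (h := fun v => ‖v‖) (by fun_prop) (by fun_prop)
      (funext fun v => by simp only [Function.comp_apply, hJT, hnorm])) v
  have hJd : DenseRange J₀ := hSd.mono (by rintro _ ⟨v, rfl⟩; exact ⟨T v, hJT v⟩)
  let J₁ : H →ₛₗᵢ[starRingEnd ℂ] H := ⟨J₀, hJn⟩
  have hsurj : Function.Surjective J₁ := by
    have hcl : IsClosed (Set.range J₁) := J₁.isometry.isClosedEmbedding.isClosed_range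
    rw [← Set.range_eq_univ, ← hcl.closure_eq]
    exact hJd.closure_range
  let J : H ≃ₗᵢ⋆[ℂ] H := LinearIsometryEquiv.ofSurjective J₁ hsurj
  have hJ : ∀ v, J (T v) = S v := hJT
  -- Symmetry of `S` reads `S = T J⁻¹`.
  have hSJ : ∀ v, S v = T (J.symm v) := by
    intro v
    refine ext_inner_right ℂ fun w => ?_
    rw [hS, ← hJ, ← J.apply_symm_apply v, tmt_inner_conj, J.symm_apply_apply, hTs]
  let T' : H →L[ℂ] H := (J.toContinuousLinearEquiv : H →L⋆[ℂ] H).comp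
    (T.comp (J.symm.toContinuousLinearEquiv : H →L⋆[ℂ] H))
  have hT' : ∀ v, T' v = J (T (J.symm v)) := fun _ => rfl
  have hT'0 : 0 ≤ T' := by
    have key : ∀ v w, inner ℂ (T' v) w = inner ℂ (J.symm w) (T (J.symm v)) := by
      intro v w
      conv_lhs => rw [hT', ← J.apply_symm_apply w, tmt_inner_conj]
    rw [ContinuousLinearMap.nonneg_iff_isPositive, ContinuousLinearMap.isPositive_iff]
    refine ⟨fun v w => ?_, fun v => ?_⟩
    · change inner ℂ (T' v) w = inner ℂ v (T' w)
      rw [key, ← inner_conj_symm v, key, inner_conj_symm, hTs]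
    · rw [key]
      exact hTp.inner_nonneg_right _
  have hsq : T' * T' = T * T := by
    ext v
    change T' (T' v) = T (T v)
    rw [hT', hT', J.symm_apply_apply, ← hSJ, hJ, hST]
  have hTT' : T' = T := (CFC.sqrt_unique hsq hT'0).symm.trans (CFC.sqrt_unique rfl hT)
  have hinj : ∀ v, T v = 0 → v = 0 := fun v hv => by
    refine congrFun (hTd.equalizer (g := fun w => inner ℂ v w) (h := fun _ => 0) (by fun_prop)
      (by fun_prop) (funext fun w => ?_)) v |> fun h => inner_self_eq_zero.1 h
    simp only [Function.comp_apply]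
    rw [← hTs, hv, inner_zero_left]
  refine ⟨J, hJ, fun v => ?_⟩
  have h1 : T' (J v) = J (T v) := by rw [hT', J.symm_apply_apply]
  rw [hTT'] at h1
  have h2 : J.symm v = J v := by
    refine sub_eq_zero.1 (hinj _ ?_)
    rw [map_sub, ← hSJ, h1, hJ, sub_self]
  rw [← h2, J.apply_symm_apply]

/-- The modular data of a real subspace `K` in general position: `R` is the sum and `J T` the
difference of the real projections `P` onto `K` and `v ↦ -i P (i v)` onto `iK`. General position
means that `K ∩ iK = 0` and that `K` spans a dense complex subspace, which makes `R` and `2 - R`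
injective. Moreover `(J T)² = R (2 - R)`, because `P` and `-i P i` are idempotent. -/
lemma tmt_modular (K : Submodule ℝ H) (hK : IsClosed (K : Set H))
    (hK1 : ∀ v ∈ K, Complex.I • v ∈ K → v = 0) (hK2 : ∀ v, (∀ k ∈ K, inner ℂ k v = 0) → v = 0) :
    ∃ (P : H →L[ℝ] H) (R T : H →L[ℂ] H) (u : ℝ → H →L[ℂ] H) (J : H ≃ₗᵢ⋆[ℂ] H),
      (∀ v, P v ∈ K) ∧ (∀ v, ∀ k ∈ K, (inner ℂ k (v - P v)).re = 0) ∧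
      (∀ v, R v = P v - Complex.I • P (Complex.I • v)) ∧
      (∀ v, J (T v) = P v + Complex.I • P (Complex.I • v)) ∧
      (∀ v, J (J v) = v) ∧ (∀ a b, inner ℂ (R a) b = inner ℂ a (R b)) ∧
      (∀ a b, inner ℂ (J (T a)) b = inner ℂ (J (T b)) a) ∧
      u 0 = 1 ∧ (∀ t v, ‖u t v‖ = ‖v‖) ∧ (∀ v, Continuous fun t => u t v) ∧
      Dense {p | Nonempty (TmtAnalytic R T u p)} := by
  obtain ⟨P, hPK, hP⟩ := tmt_exists_proj K hK
  have hPid : ∀ k ∈ K, P k = k := fun k hk => by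
    have h := hP k (k - P k) (K.sub_mem hk (hPK k))
    have h2 : RCLike.re (inner ℂ (k - P k) (k - P k)) = 0 := h
    rw [inner_self_eq_norm_sq] at h2
    exact (sub_eq_zero.1 (norm_eq_zero.1 (pow_eq_zero_iff two_ne_zero |>.1 h2))).symm
  have hPP : ∀ v, P (P v) = P v := fun v => hPid _ (hPK v)
  have hPs : ∀ v w, (inner ℂ (P v) w).re = (inner ℂ v (P w)).re := by
    intro v w
    have h1 := hP w (P v) (hPK v)
    have h2 := hP v (P w) (hPK w)
    have h3 : (inner ℂ v (P w)).re = (inner ℂ (P w) v).re := by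
      rw [← inner_conj_symm, Complex.conj_re]
    have h4 : (inner ℂ (P v) (P w)).re = (inner ℂ (P w) (P v)).re := by
      rw [← inner_conj_symm, Complex.conj_re]
    rw [inner_sub_right, Complex.sub_re] at h1 h2
    linarith
  have hII : ∀ v : H, Complex.I • Complex.I • v = -v := fun v => by
    rw [smul_smul, Complex.I_mul_I, neg_one_smul]
  have hQs : ∀ v w, (inner ℂ (Complex.I • P (Complex.I • v)) w).re =
      (inner ℂ v (Complex.I • P (Complex.I • w))).re := by
    intro v w
    have h1 := hPs (Complex.I • v) (Complex.I • w)
    simp only [inner_smul_left, inner_smul_right, Complex.conj_I] at h1 ⊢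
    simp only [Complex.mul_re, Complex.neg_re, Complex.neg_im, Complex.I_re, Complex.I_im] at h1 ⊢
    linarith
  have hsmul : ∀ (f : H →L[ℝ] H) (c : ℂ) (v : H), f (c • v) =
      (c.re : ℂ) • f v + (c.im : ℂ) • f (Complex.I • v) := by
    intro f c v
    have h : c • v = c.re • v + c.im • (Complex.I • v) := by
      conv_lhs => rw [← Complex.re_add_im c, add_smul, mul_smul]
      simp only [Complex.coe_smul]
    rw [h, map_add, map_smul, map_smul, Complex.coe_smul, Complex.coe_smul]
  let R : H →L[ℂ] H :=
    { toFun := fun v => P v - Complex.I • P (Complex.I • v)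
      map_add' := fun v w => by simp only [smul_add, map_add]; abel
      map_smul' := fun c v => by
        rw [smul_comm Complex.I c, hsmul P, hsmul P c, hII, map_neg, RingHom.id_apply]
        conv_rhs => rw [← Complex.re_add_im c]
        simp only [smul_add, smul_sub, smul_neg, add_smul, mul_smul, hII,
          smul_comm Complex.I (c.re : ℂ), smul_comm Complex.I (c.im : ℂ)]
        abel
      cont := by fun_prop }
  let S : H →L⋆[ℂ] H :=
    { toFun := fun v => P v + Complex.I • P (Complex.I • v)
      map_add' := fun v w => by simp only [smul_add, map_add]; abel
      map_smul' := fun c v => by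
        rw [smul_comm Complex.I c, hsmul P, hsmul P c, hII, map_neg]
        conv_rhs => rw [← Complex.re_add_im c]
        simp only [smul_add, smul_neg, add_smul, mul_smul, hII, map_add, map_mul,
          Complex.conj_ofReal, Complex.conj_I, neg_smul,
          smul_comm Complex.I (c.re : ℂ), smul_comm Complex.I (c.im : ℂ)]
        abel
      cont := by fun_prop }
  have hRv : ∀ v, R v = P v - Complex.I • P (Complex.I • v) := fun _ => rfl
  have hSv : ∀ v, S v = P v + Complex.I • P (Complex.I • v) := fun _ => rfl
  have hRs : ∀ a b, inner ℂ (R a) b = inner ℂ a (R b) := fun a b => by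
    refine tmt_complex_ext (F := fun b => inner ℂ (R a) b) (G := fun b => inner ℂ a (R b))
      (fun w => ?_) (fun w => ?_) (fun w => ?_) b
    · rw [inner_smul_right]
    · rw [map_smul, inner_smul_right]
    · rw [hRv, hRv, inner_sub_left, inner_sub_right, Complex.sub_re, Complex.sub_re, hPs, hQs]
  have hSs : ∀ a b, inner ℂ (S a) b = inner ℂ (S b) a := fun a b => by
    refine tmt_complex_ext (F := fun b => inner ℂ (S a) b) (G := fun b => inner ℂ (S b) a)
      (fun w => ?_) (fun w => ?_) (fun w => ?_) b
    · rw [inner_smul_right]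
    · rw [ContinuousLinearMap.map_smulₛₗ, inner_smul_left, Complex.conj_conj]
    · rw [← inner_conj_symm (S w), Complex.conj_re]
      rw [hSv, hSv, inner_add_left, inner_add_right, Complex.add_re, Complex.add_re, hPs, hQs]
  have hPpos : ∀ v, (inner ℂ v (P v)).re = ‖P v‖ ^ 2 := fun v => by
    rw [← hPP, ← hPs, hPP]
    exact inner_self_eq_norm_sq (𝕜 := ℂ) _
  have hPle : ∀ v, (inner ℂ v (P v)).re = ‖v‖ ^ 2 - ‖v - P v‖ ^ 2 := fun v => by
    have h1 := norm_sub_sq (𝕜 := ℂ) v (P v)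
    have h2 := hPpos v
    have h3 : RCLike.re (inner ℂ v (P v)) = ‖P v‖ ^ 2 := h2
    rw [h3] at h1
    rw [h2]; linarith
  have hRre : ∀ v, (inner ℂ v (R v)).re =
      (inner ℂ v (P v)).re + (inner ℂ (Complex.I • v) (P (Complex.I • v))).re := fun v => by
    rw [hRv, inner_sub_right, Complex.sub_re, inner_smul_left, inner_smul_right, Complex.conj_I,
      neg_mul, Complex.neg_re, sub_eq_add_neg]
  have hIn : ∀ v : H, ‖Complex.I • v‖ = ‖v‖ := fun v => by rw [norm_smul, Complex.norm_I, one_mul]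
  have hRnn : ∀ v, 0 ≤ (inner ℂ v (R v)).re := fun v => by
    rw [hRre, hPpos, hPpos]; positivity
  have h2v : ∀ v, (2 - R) v = (2 : ℂ) • v - R v := fun v => by
    rw [← one_add_one_eq_two (R := H →L[ℂ] H), two_smul]
    rfl
  have hRle : ∀ v, (inner ℂ v ((2 - R) v)).re =
      ‖v - P v‖ ^ 2 + ‖Complex.I • v - P (Complex.I • v)‖ ^ 2 := fun v => by
    rw [h2v, inner_sub_right, Complex.sub_re, hRre, hPle, hPle, hIn, inner_smul_right]
    have : inner ℂ v v = ((‖v‖ ^ 2 : ℝ) : ℂ) := by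
      rw [inner_self_eq_norm_sq_to_K]; norm_cast
    rw [this]
    norm_cast
    ring
  have h0 : 0 ≤ R := by
    rw [ContinuousLinearMap.nonneg_iff_isPositive, ContinuousLinearMap.isPositive_def]
    refine ⟨hRs, fun v => ?_⟩
    rw [ContinuousLinearMap.reApplyInnerSelf_apply, hRs]
    exact hRnn v
  have h2 : R ≤ 2 := by
    rw [ContinuousLinearMap.le_def, ContinuousLinearMap.isPositive_def]
    have hs : ∀ v w, inner ℂ ((2 - R) v) w = inner ℂ v ((2 - R) w) := fun v w => by
      rw [h2v, h2v, inner_sub_left, inner_sub_right, hRs, inner_smul_left, inner_smul_right,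
        map_ofNat]
    refine ⟨hs, fun v => ?_⟩
    rw [ContinuousLinearMap.reApplyInnerSelf_apply, hs]
    have := hRle v
    change 0 ≤ (inner ℂ v ((2 - R) v)).re
    rw [this]; positivity
  have hR : ∀ v, R v = 0 → v = 0 := fun v hv => by
    have h := hRre v
    rw [hv, inner_zero_right, hPpos, hPpos, Complex.zero_re] at h
    have e1 : P v = 0 := by
      rw [← norm_eq_zero, ← sq_eq_zero_iff]
      nlinarith [sq_nonneg ‖P v‖, sq_nonneg ‖P (Complex.I • v)‖]
    have e2 : P (Complex.I • v) = 0 := by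
      rw [← norm_eq_zero, ← sq_eq_zero_iff]
      nlinarith [sq_nonneg ‖P v‖, sq_nonneg ‖P (Complex.I • v)‖]
    refine hK2 v fun k hk => Complex.ext ?_ ?_
    · have := hP v k hk
      rwa [e1, sub_zero] at this
    · have := hP (Complex.I • v) k hk
      rw [e2, sub_zero, inner_smul_right, Complex.I_mul_re] at this
      simpa using this
  have hR2 : ∀ v, (2 - R) v = 0 → v = 0 := fun v hv => by
    have h := hRle v
    rw [hv, inner_zero_right, Complex.zero_re] at h
    have e1 : v - P v = 0 := by
      rw [← norm_eq_zero, ← sq_eq_zero_iff]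
      nlinarith [sq_nonneg ‖v - P v‖, sq_nonneg ‖Complex.I • v - P (Complex.I • v)‖]
    have e2 : Complex.I • v - P (Complex.I • v) = 0 := by
      rw [← norm_eq_zero, ← sq_eq_zero_iff]
      nlinarith [sq_nonneg ‖v - P v‖, sq_nonneg ‖Complex.I • v - P (Complex.I • v)‖]
    refine hK1 v ?_ ?_
    · rw [sub_eq_zero.1 e1]; exact hPK _
    · rw [sub_eq_zero.1 e2]; exact hPK _
  obtain ⟨T, u, hT0, hTT, hTd, hu⟩ := tmt_exists_flow R h0 h2 hR hR2
  obtain ⟨J, hJ, hJJ⟩ := tmt_polar T S hT0 hTd hSs fun v => by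
    have h1 : T (T v) = R ((2 - R) v) := congrArg (fun f : H →L[ℂ] H => f v) hTT
    rw [h1, h2v, map_sub, map_smul]
    simp only [hRv, hSv, smul_add, smul_sub, smul_neg, map_add, map_sub, hII, hPP, map_neg, two_smul]
    abel
  refine ⟨P, R, T, u, J, hPK, hP, hRv, fun v => by rw [hJ, hSv], hJJ, hRs, fun a b => ?_, hu⟩
  rw [hJ, hJ, hSs]

end RealSubspace

/-! ### The real subspace of a cyclic and separating vector -/

section Algebra

variable {H : Type*} [NormedAddCommGroup H] [InnerProductSpace ℂ H] [CompleteSpace H]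

lemma tmt_smul_mem (M : VonNeumannAlgebra H) (c : ℂ) {x : H →L[ℂ] H} (hx : x ∈ M) : c • x ∈ M :=
  M.toStarSubalgebra.smul_mem hx c

lemma tmt_comm {A : VonNeumannAlgebra H} {x a : H →L[ℂ] H} (hx : x ∈ A) (ha : a ∈ A.commutant)
    (v : H) : x (a v) = a (x v) :=
  congrArg (fun f : H →L[ℂ] H => f v) (VonNeumannAlgebra.mem_commutant_iff.1 ha x hx)

lemma tmt_mem_commutant {A : VonNeumannAlgebra H} {a : H →L[ℂ] H}
    (h : ∀ x ∈ A, ∀ v, x (a v) = a (x v)) : a ∈ A.commutant :=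
  VonNeumannAlgebra.mem_commutant_iff.2 fun x hx => ContinuousLinearMap.ext (h x hx)

lemma tmt_inner_sa {x : H →L[ℂ] H} (hx : IsSelfAdjoint x) (v w : H) :
    inner ℂ (x v) w = inner ℂ v (x w) := by
  conv_lhs => rw [← hx.star_eq]
  exact ContinuousLinearMap.adjoint_inner_left _ _ _

lemma tmt_re_im (M : VonNeumannAlgebra H) {x : H →L[ℂ] H} (hx : x ∈ M) :
    ∃ b ∈ M, ∃ c ∈ M, IsSelfAdjoint b ∧ IsSelfAdjoint c ∧ x = b + Complex.I • c := by
  have hs : star x ∈ M := star_mem hx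
  refine ⟨(1 / 2 : ℂ) • (x + star x), tmt_smul_mem M _ (add_mem hx hs),
    (-(Complex.I / 2)) • (x - star x), tmt_smul_mem M _ (sub_mem hx hs), ?_, ?_, ?_⟩
  · rw [IsSelfAdjoint, star_smul, star_add, star_star, add_comm x]
    simp
  · rw [IsSelfAdjoint, star_smul, star_sub, star_star, ← neg_sub x, smul_neg, ← neg_smul]
    simp [neg_div]
  · rw [smul_smul, show Complex.I * -(Complex.I / 2) = 1 / 2 by
      linear_combination (-1 / 2 : ℂ) * Complex.I_mul_I, ← smul_add, add_add_sub_cancel,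
      ← two_smul ℂ x, smul_smul]
    norm_num

/-- A separating vector for `A` is cyclic for the commutant of `A`: the projection onto the
closure of `A' ξ` lies in `A` and fixes `ξ`. -/
lemma tmt_dense_commutant (A : VonNeumannAlgebra H) (ξ : H)
    (hsep : ∀ x ∈ A, x ξ = 0 → x = 0) : Dense {v | ∃ a ∈ A.commutant, a ξ = v} := by
  let U₀ : Submodule ℂ H :=
    { carrier := {v | ∃ a ∈ A.commutant, a ξ = v}
      add_mem' := by
        rintro _ _ ⟨a, ha, rfl⟩ ⟨b, hb, rfl⟩
        exact ⟨a + b, add_mem ha hb, rfl⟩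
      zero_mem' := ⟨0, zero_mem _, rfl⟩
      smul_mem' := by
        rintro c _ ⟨a, ha, rfl⟩
        exact ⟨c • a, tmt_smul_mem _ c ha, rfl⟩ }
  let U := U₀.topologicalClosure
  have hUc : IsClosed (U : Set H) := U₀.isClosed_topologicalClosure
  have : CompleteSpace U := hUc.completeSpace_coe
  have hinv : ∀ y ∈ A.commutant, ∀ v ∈ U, y v ∈ U := fun y hy v hv => by
    refine closure_minimal (s := (U₀ : Set H)) (t := y ⁻¹' U) ?_ (hUc.preimage y.continuous) hv
    rintro _ ⟨a, ha, rfl⟩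
    exact U₀.le_topologicalClosure ⟨y * a, mul_mem hy ha, rfl⟩
  have he : U.starProjection ∈ A := by
    rw [VonNeumannAlgebra.IsStarProjection.mem_iff isStarProjection_starProjection]
    intro y hy v hv
    rw [Submodule.mem_comap]
    rw [U.range_starProjection] at hv ⊢
    exact hinv y hy v hv
  have hξ : ξ ∈ U := U₀.le_topologicalClosure ⟨1, one_mem _, rfl⟩
  have h1 := hsep (1 - U.starProjection) (sub_mem (one_mem _) he) (by
    rw [sub_apply, Submodule.starProjection_eq_self_iff.2 hξ]; exact sub_self _)
  intro v
  change v ∈ U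
  rw [← Submodule.starProjection_eq_self_iff, ← sub_eq_zero.1 h1]
  rfl

lemma tmt_dense_span (A : VonNeumannAlgebra H) (ξ : H)
    (hcyc : Dense (Submodule.span ℂ ((fun x : H →L[ℂ] H => x ξ) '' (A : Set (H →L[ℂ] H))) :
      Set H)) : Dense {v | ∃ a ∈ A, a ξ = v} := by
  refine hcyc.mono fun v hv => ?_
  refine Submodule.span_induction ?_ ?_ ?_ ?_ hv
  · rintro _ ⟨a, ha, rfl⟩; exact ⟨a, ha, rfl⟩
  · exact ⟨0, zero_mem _, rfl⟩
  · rintro _ _ _ _ ⟨a, ha, rfl⟩ ⟨b, hb, rfl⟩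
    exact ⟨a + b, add_mem ha hb, rfl⟩
  · rintro c _ _ ⟨a, ha, rfl⟩
    exact ⟨c • a, tmt_smul_mem _ c ha, rfl⟩

/-- The closed real subspace generated by the vectors `a ξ` with `a ∈ M` self-adjoint. -/
noncomputable def tmtReal (M : VonNeumannAlgebra H) (ξ : H) : Submodule ℝ H :=
  Submodule.topologicalClosure
    { carrier := {v | ∃ a ∈ M, IsSelfAdjoint a ∧ a ξ = v}
      add_mem' := by
        rintro _ _ ⟨a, ha, ha', rfl⟩ ⟨b, hb, hb', rfl⟩
        exact ⟨a + b, add_mem ha hb, ha'.add hb', rfl⟩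
      zero_mem' := ⟨0, zero_mem _, .zero _, rfl⟩
      smul_mem' := by
        rintro c _ ⟨a, ha, ha', rfl⟩
        refine ⟨(c : ℂ) • a, tmt_smul_mem _ _ ha, ?_, by simp⟩
        rw [IsSelfAdjoint, star_smul, ha'.star_eq]
        simp }

lemma tmt_isClosed_real (M : VonNeumannAlgebra H) (ξ : H) : IsClosed (tmtReal M ξ : Set H) :=
  Submodule.isClosed_topologicalClosure _

lemma tmt_mem_real {M : VonNeumannAlgebra H} {a : H →L[ℂ] H} (ha : a ∈ M) (hsa : IsSelfAdjoint a)
    (ξ : H) : a ξ ∈ tmtReal M ξ :=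
  Submodule.le_topologicalClosure _ ⟨a, ha, hsa, rfl⟩

lemma tmt_real_induction {M : VonNeumannAlgebra H} {ξ : H} {p : H → Prop}
    (hp : IsClosed {v | p v}) (h : ∀ a ∈ M, IsSelfAdjoint a → p (a ξ)) {v : H}
    (hv : v ∈ tmtReal M ξ) : p v := by
  refine closure_minimal ?_ hp hv
  rintro _ ⟨a, ha, hsa, rfl⟩
  exact h a ha hsa

/-- Vectors of `tmtReal A' ξ` have real inner product with `x ξ` for `x ∈ A` self-adjoint, because
`⟪a ξ, x ξ⟫ = ⟪ξ, a x ξ⟫` and `a x` is self-adjoint for `a` self-adjoint in the commutant `A'`. -/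
lemma tmt_real_im (A : VonNeumannAlgebra H) (ξ : H) {v : H} (hv : v ∈ tmtReal A.commutant ξ)
    {x : H →L[ℂ] H} (hx : x ∈ A) (hsa : IsSelfAdjoint x) : (inner ℂ v (x ξ)).im = 0 := by
  refine tmt_real_induction (p := fun v => (inner ℂ v (x ξ)).im = 0)
    (isClosed_eq (by fun_prop) continuous_const) (fun a ha ha' => ?_) hv
  rw [← Complex.conj_eq_iff_im, inner_conj_symm, tmt_inner_sa hsa, tmt_comm hx ha,
    tmt_inner_sa ha']

/-- The real subspace `K` of the commutant satisfies `K ∩ iK = 0`, since `ξ` is cyclic for `A`. -/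
lemma tmt_real_inter (A : VonNeumannAlgebra H) (ξ : H) (hd : Dense {v | ∃ x ∈ A, x ξ = v})
    (v : H) (hv : v ∈ tmtReal A.commutant ξ) (hv' : Complex.I • v ∈ tmtReal A.commutant ξ) :
    v = 0 := by
  have h1 : ∀ x ∈ A, IsSelfAdjoint x → inner ℂ v (x ξ) = 0 := fun x hx hsa => by
    have e1 := tmt_real_im A ξ hv hx hsa
    have e2 := tmt_real_im A ξ hv' hx hsa
    rw [inner_smul_left, Complex.conj_I, neg_mul, Complex.neg_im, Complex.I_mul_im,
      neg_eq_zero] at e2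
    exact Complex.ext e2 e1
  refine hd.eq_zero_of_inner_left ℂ ?_
  rintro _ ⟨x, hx, rfl⟩
  obtain ⟨b, hb, c, hc, hb', hc', rfl⟩ := tmt_re_im A hx
  simp [inner_add_right, inner_smul_right, h1 b hb hb', h1 c hc hc']

/-- The real subspace of `M` spans a dense complex subspace when `ξ` is cyclic for `M`. -/
lemma tmt_real_dense (M : VonNeumannAlgebra H) (ξ : H) (hd : Dense {v | ∃ x ∈ M, x ξ = v})
    (v : H) (hv : ∀ k ∈ tmtReal M ξ, inner ℂ k v = 0) : v = 0 := by
  refine hd.eq_zero_of_inner_right ℂ ?_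
  rintro _ ⟨x, hx, rfl⟩
  obtain ⟨b, hb, c, hc, hb', hc', rfl⟩ := tmt_re_im M hx
  simp [inner_add_left, inner_smul_left, hv _ (tmt_mem_real hb hb' ξ), hv _ (tmt_mem_real hc hc' ξ)]

lemma tmt_cfc_mem (A : VonNeumannAlgebra H) {a : H →L[ℂ] H} (ha : a ∈ A.commutant) (f : ℝ → ℝ) :
    cfc f a ∈ A.commutant :=
  VonNeumannAlgebra.mem_commutant_iff.2 fun x hx =>
    ((Commute.symm (VonNeumannAlgebra.mem_commutant_iff.1 ha x hx)).cfc_real f).symm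

end Algebra

/-! ### Bounded sets and absolute values in the commutant -/

section RadonNikodym

variable {H : Type*} [NormedAddCommGroup H] [InnerProductSpace ℂ H] [CompleteSpace H]

/-- The vectors `h ξ`, with `h` self-adjoint in the commutant and `‖h‖ ≤ r`, form a closed set:
a limit vector `w` defines the operator `x ξ ↦ x w`. -/
lemma tmt_strong_lim (A : VonNeumannAlgebra H) (ξ : H) (hd : Dense {v | ∃ x ∈ A, x ξ = v}) (r : ℝ) :
    IsClosed {v | ∃ h ∈ A.commutant, IsSelfAdjoint h ∧ ‖h‖ ≤ r ∧ h ξ = v} := by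
  refine IsSeqClosed.isClosed fun s w hs hw => ?_
  choose h hM hsa hn hξ using hs
  have hr : 0 ≤ r := (norm_nonneg _).trans (hn 0)
  let e : A.toStarSubalgebra →ₗ[ℂ] H :=
    { toFun := fun x => (x : H →L[ℂ] H) ξ
      map_add' := fun _ _ => rfl
      map_smul' := fun _ _ => rfl }
  let f : A.toStarSubalgebra →ₗ[ℂ] H :=
    { toFun := fun x => (x : H →L[ℂ] H) w
      map_add' := fun _ _ => rfl
      map_smul' := fun _ _ => rfl }
  have he : DenseRange e := hd.mono (by rintro _ ⟨x, hx, rfl⟩; exact ⟨⟨x, hx⟩, rfl⟩)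
  have hlim : ∀ x ∈ A, Tendsto (fun n => h n (x ξ)) atTop (𝓝 (x w)) := fun x hx => by
    have h1 : ∀ n, h n (x ξ) = x (s n) := fun n => by rw [← hξ, tmt_comm hx (hM n)]
    simp only [h1]
    exact (x.continuous.tendsto _).comp hw
  have hfe : ∀ x, ‖f x‖ ≤ r * ‖e x‖ := fun x => by
    refine le_of_tendsto (hlim x x.2).norm (Eventually.of_forall fun n => ?_)
    exact (h n).le_of_opNorm_le (hn n) _
  let g : H →L[ℂ] H := f.extendOfNorm e
  have hg : ∀ x ∈ A, g (x ξ) = x w := fun x hx =>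
    LinearMap.extendOfNorm_eq (f := f) (e := e) he ⟨r, hfe⟩ ⟨x, hx⟩
  refine ⟨g, tmt_mem_commutant fun z hz v => ?_, ?_, ?_, ?_⟩
  · refine congrFun (he.equalizer (g := fun v => z (g v)) (h := fun v => g (z v)) (by fun_prop)
      (by fun_prop) (funext fun x => ?_)) v
    change z (g ((x : H →L[ℂ] H) ξ)) = g ((z * x) ξ)
    rw [hg _ x.2, hg _ (mul_mem hz x.2)]
    rfl
  · rw [ContinuousLinearMap.isSelfAdjoint_iff_isSymmetric]
    intro v v'
    change inner ℂ (g v) v' = inner ℂ v (g v')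
    have key : ∀ x y : A.toStarSubalgebra, inner ℂ (g (e x)) (e y) = inner ℂ (e x) (g (e y)) := by
      intro x y
      change inner ℂ (g ((x : H →L[ℂ] H) ξ)) ((y : H →L[ℂ] H) ξ) =
        inner ℂ ((x : H →L[ℂ] H) ξ) (g ((y : H →L[ℂ] H) ξ))
      rw [hg _ x.2, hg _ y.2]
      have h1 := (hlim x x.2).inner (𝕜 := ℂ) (tendsto_const_nhds (x := (y : H →L[ℂ] H) ξ))
      have h2 := (tendsto_const_nhds (x := (x : H →L[ℂ] H) ξ)).inner (𝕜 := ℂ) (hlim y y.2)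
      simp only [tmt_inner_sa (hsa _)] at h1
      exact tendsto_nhds_unique h1 h2
    have key2 : ∀ x v', inner ℂ (g (e x)) v' = inner ℂ (e x) (g v') := fun x v' =>
      congrFun (he.equalizer (g := fun v' => inner ℂ (g (e x)) v')
        (h := fun v' => inner ℂ (e x) (g v')) (by fun_prop) (by fun_prop)
        (funext fun y => key x y)) v'
    exact congrFun (he.equalizer (g := fun v => inner ℂ (g v) v')
        (h := fun v => inner ℂ v (g v')) (by fun_prop) (by fun_prop)
        (funext fun y => key2 y v')) v
  · exact g.opNorm_le_bound hr (LinearMap.norm_extendOfNorm_apply_le (f := f) (e := e) he r hfe)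
  · exact hg 1 (one_mem _)

/-- The variational inequality for the nearest point of a closed convex set. -/
lemma tmt_nearest (S : Set H) (hne : S.Nonempty) (hcl : IsClosed S) (hconv : Convex ℝ S) (w : H) :
    ∃ v ∈ S, ∀ s ∈ S, (inner ℂ (w - v) (s - v)).re ≤ 0 := by
  let _ : InnerProductSpace ℝ H := InnerProductSpace.rclikeToReal ℂ H
  obtain ⟨v, hv, h⟩ := exists_norm_eq_iInf_of_complete_convex hne hcl.isComplete hconv w
  refine ⟨v, hv, fun s hs => ?_⟩
  have := (norm_eq_iInf_iff_real_inner_le_zero hconv hv).1 h s hs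
  rwa [real_inner_eq_re_inner ℂ] at this

/-- For `a` self-adjoint commuting with `x`, the real part of `⟪ξ, x a ξ⟫` is at most
`‖x‖ ⟪ξ, |a| ξ⟫`, and `|a|` is approximated by `a g` with `‖g‖ ≤ 1`. -/
lemma tmt_abs_bound (A : VonNeumannAlgebra H) (ξ : H) {x a : H →L[ℂ] H} (hx : x ∈ A)
    (ha : a ∈ A.commutant) (hsa : IsSelfAdjoint a) {ε : ℝ} (hε : 0 < ε) :
    ∃ g ∈ A.commutant, IsSelfAdjoint g ∧ ‖g‖ ≤ 1 ∧ g * a = a * g ∧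
      (inner ℂ ξ (x (a ξ))).re ≤ ‖x‖ * ((inner ℂ ξ (a (g ξ))).re + ε * ‖ξ‖ ^ 2) := by
  have hden : ∀ s : ℝ, |s| + ε ≠ 0 := fun s => by positivity
  have hgc : Continuous fun s : ℝ => s / (|s| + ε) := by
    fun_prop (disch := exact hden _)
  -- A positive function of `a` is `d * d` with `d` in the commutant, and
  -- `⟪ξ, x d d ξ⟫ = ⟪d ξ, x d ξ⟫`.
  have hpart : ∀ f : ℝ → ℝ, Continuous f → (∀ s, 0 ≤ f s) →
      |(inner ℂ ξ (x (cfc f a ξ))).re| ≤ ‖x‖ * (inner ℂ ξ (cfc f a ξ)).re := by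
    intro f hf hf0
    let d := cfc (fun s => √(f s)) a
    have hd : d ∈ A.commutant := tmt_cfc_mem A ha _
    have hdsa : IsSelfAdjoint d := cfc_predicate _ _
    have hdd : cfc f a = d * d := by
      have hc : Continuous fun s => √(f s) := by fun_prop
      rw [← cfc_mul _ _ a hc.continuousOn hc.continuousOn]
      congr 1; ext s; exact (Real.mul_self_sqrt (hf0 s)).symm
    have e1 : inner ℂ ξ (x (cfc f a ξ)) = inner ℂ (d ξ) (x (d ξ)) := by
      rw [hdd, tmt_inner_sa hdsa, ← tmt_comm hx hd]; rfl
    have e2 : inner ℂ ξ (cfc f a ξ) = inner ℂ (d ξ) (d ξ) := by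
      rw [hdd, tmt_inner_sa hdsa]; rfl
    have e3 : (inner ℂ (d ξ) (d ξ)).re = ‖d ξ‖ ^ 2 := inner_self_eq_norm_sq (𝕜 := ℂ) _
    rw [e1, e2, e3]
    calc _ ≤ ‖inner ℂ (d ξ) (x (d ξ))‖ := Complex.abs_re_le_norm _
      _ ≤ ‖d ξ‖ * (‖x‖ * ‖d ξ‖) := (norm_inner_le_norm _ _).trans
          (mul_le_mul_of_nonneg_left (x.le_opNorm _) (norm_nonneg _))
      _ = _ := by ring
  refine ⟨cfc (fun s : ℝ => s / (|s| + ε)) a, tmt_cfc_mem A ha _, cfc_predicate _ _, ?_, ?_, ?_⟩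
  · refine norm_cfc_le zero_le_one fun s _ => ?_
    rw [norm_div, Real.norm_eq_abs, Real.norm_of_nonneg (by positivity : 0 ≤ |s| + ε),
      div_le_one (by positivity)]
    linarith
  · exact ((Commute.refl a).cfc_real _)
  · let p : ℝ → ℝ := fun s => max s 0
    let m : ℝ → ℝ := fun s => max (-s) 0
    have hpc : Continuous p := by fun_prop
    have hmc : Continuous m := by fun_prop
    have hpm : cfc p a - cfc m a = a := by
      rw [← cfc_sub _ _ a hpc.continuousOn hmc.continuousOn]
      conv_rhs => rw [← cfc_id' ℝ a]
      congr 1; ext s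
      simp only [p, m]
      rcases le_total s 0 with h | h <;> simp [h]
    -- `|s| ≤ s (s / (|s| + ε)) + ε`.
    have habs : cfc p a + cfc m a ≤ a * cfc (fun s : ℝ => s / (|s| + ε)) a +
        algebraMap ℝ (H →L[ℂ] H) ε := by
      have h1 : a * cfc (fun s : ℝ => s / (|s| + ε)) a = cfc (fun s : ℝ => s * (s / (|s| + ε))) a := by
        rw [cfc_mul (fun s : ℝ => s) _ a continuousOn_id hgc.continuousOn, cfc_id' ℝ a]
      rw [h1, ← cfc_add_const ε (fun s : ℝ => s * (s / (|s| + ε))) a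
        (by have := hgc; fun_prop), ← cfc_add a p m hpc.continuousOn hmc.continuousOn]
      refine cfc_mono (fun s _ => ?_) (hpc.add hmc).continuousOn
        (by have := hgc; fun_prop)
      have h2 : p s + m s = |s| := by
        simp only [p, m]
        rcases le_total s 0 with h | h <;> simp [h, abs_of_nonneg, abs_of_nonpos]
      rw [h2]
      have h3 : s * (s / (|s| + ε)) = |s| - ε + ε ^ 2 / (|s| + ε) := by
        have := hden s
        field_simp
        rw [← sq_abs s]; ring
      rw [h3]
      have : 0 ≤ ε ^ 2 / (|s| + ε) := by positivity
      linarith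
    have h4 := ((ContinuousLinearMap.le_def _ _).1 habs).re_inner_nonneg_right ξ
    have h5 := hpart p hpc fun s => le_max_right _ _
    have h6 := hpart m hmc fun s => le_max_right _ _
    have h7 : inner ℂ ξ (x (a ξ)) = inner ℂ ξ (x (cfc p a ξ)) - inner ℂ ξ (x (cfc m a ξ)) := by
      conv_lhs => rw [← hpm]
      rw [sub_apply, map_sub, inner_sub_right]
    have h8 : (inner ℂ ξ ξ).re = ‖ξ‖ ^ 2 := inner_self_eq_norm_sq (𝕜 := ℂ) _
    have h9 : (algebraMap ℝ (H →L[ℂ] H) ε) ξ = (ε : ℂ) • ξ := by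
      rw [Algebra.algebraMap_eq_smul_one]; simp
    rw [sub_apply, add_apply, add_apply, inner_sub_right, inner_add_right, inner_add_right,
      h9, inner_smul_right] at h4
    rw [RCLike.re_eq_complex_re] at h4
    rw [Complex.sub_re, Complex.add_re, Complex.add_re, Complex.re_ofReal_mul, h8] at h4
    rw [h7, Complex.sub_re]
    calc _ ≤ ‖x‖ * ((inner ℂ ξ (cfc p a ξ)).re + (inner ℂ ξ (cfc m a ξ)).re) := by
          linarith [(abs_le.1 h5).2, (abs_le.1 h6).1]
      _ ≤ _ := by
          refine mul_le_mul_of_nonneg_left ?_ (norm_nonneg _)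
          linarith! [h4]

end RadonNikodym

/-! ### The linear Radon–Nikodym theorem -/

section RadonNikodym

variable {H : Type*} [NormedAddCommGroup H] [InnerProductSpace ℂ H] [CompleteSpace H]

/-- Linear Radon–Nikodym theorem: for `x ∈ A` and `Re μ > 0`, the projection of `x ξ`
onto the real subspace `K` of the commutant is the projection of `2 μ h ξ` for a self-adjoint `h` in
the commutant. With `‖h‖ ≤ r = ‖x‖ / (2 Re μ)`, the vectors `P (2 μ h ξ)` form a closed convex set;
if `k` is the difference of `P (x ξ)` and its nearest point in the set, then `k` is nearly `a ξ`
with `a` self-adjoint in the commutant, and comparison with `h = r sgn a` forces `k = 0`. -/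
lemma tmt_radon_nikodym (A : VonNeumannAlgebra H) (ξ : H) (hd : Dense {v | ∃ x ∈ A, x ξ = v})
    {P : H →L[ℝ] H} (hPK : ∀ v, P v ∈ tmtReal A.commutant ξ)
    (hP : ∀ v, ∀ k ∈ tmtReal A.commutant ξ, (inner ℂ k (v - P v)).re = 0)
    {x : H →L[ℂ] H} (hx : x ∈ A) {μ : ℂ} (hμ : 0 < μ.re) :
    ∃ h ∈ A.commutant, IsSelfAdjoint h ∧ P (x ξ) = P ((2 * μ) • h ξ) := by
  have hPin : ∀ v, ∀ k ∈ tmtReal A.commutant ξ, (inner ℂ k (P v)).re = (inner ℂ k v).re := by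
    intro v k hk
    have := hP v k hk
    rw [inner_sub_right, Complex.sub_re] at this
    linarith
  set r : ℝ := ‖x‖ / (2 * μ.re) with hr
  have hr0 : 0 ≤ r := by positivity
  have hrx : 2 * μ.re * r = ‖x‖ := by rw [hr]; field_simp
  let D : Set H := {v | ∃ h ∈ A.commutant, IsSelfAdjoint h ∧ ‖h‖ ≤ r ∧ h ξ = v}
  have hDcl : IsClosed D := tmt_strong_lim A ξ hd r
  have hDK : ∀ v ∈ D, v ∈ tmtReal A.commutant ξ := by
    rintro _ ⟨h, hM, hsa, -, rfl⟩
    exact tmt_mem_real hM hsa ξ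
  let f : H → H := fun v => P ((2 * μ) • v)
  have hfsub : ∀ v v', f v - f v' = f (v - v') := fun v v' => by
    simp only [f, smul_sub, map_sub]
  -- `f` is bounded below on `K`, because `⟪v, f v⟫` has real part `2 Re μ ‖v‖²`.
  have hflow : ∀ v ∈ tmtReal A.commutant ξ, 2 * μ.re * ‖v‖ ≤ ‖f v‖ := by
    intro v hv
    rcases (norm_nonneg v).eq_or_lt with h0 | h0
    · rw [← h0]; simp
    have h1 : (inner ℂ v (f v)).re = 2 * μ.re * ‖v‖ ^ 2 := by
      have h2 : inner ℂ v v = ((‖v‖ ^ 2 : ℝ) : ℂ) := by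
        rw [inner_self_eq_norm_sq_to_K]; norm_cast
      rw [hPin _ _ hv, inner_smul_right, h2, Complex.re_mul_ofReal]
      simp
    have h3 := (Complex.re_le_norm _).trans (norm_inner_le_norm (𝕜 := ℂ) v (f v))
    rw [h1] at h3
    nlinarith
  have hSrange : f '' D = Set.range fun d : D => f d := by
    ext v; simp
  have hScl : IsClosed (f '' D) := by
    rw [hSrange]
    have : CompleteSpace D := hDcl.completeSpace_coe
    have hanti : AntilipschitzWith ⟨1 / (2 * μ.re), by positivity⟩ fun d : D => f d := by
      refine AntilipschitzWith.of_le_mul_dist fun d d' => ?_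
      rw [Subtype.dist_eq, dist_eq_norm, dist_eq_norm, hfsub]
      have := hflow _ (Submodule.sub_mem _ (hDK _ d.2) (hDK _ d'.2))
      change _ ≤ 1 / (2 * μ.re) * _
      rw [one_div, inv_mul_eq_div, le_div_iff₀ (by positivity)]
      linarith
    exact hanti.isClosed_range ((P.uniformContinuous.comp
      (uniformContinuous_const_smul (2 * μ))).comp uniformContinuous_subtype_val)
  have hSconv : Convex ℝ (f '' D) := by
    rintro _ ⟨_, ⟨h, hM, hsa, hn, rfl⟩, rfl⟩ _ ⟨_, ⟨h', hM', hsa', hn', rfl⟩, rfl⟩ s t hs ht hst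
    have hadj : ∀ (c : ℝ) {g : H →L[ℂ] H}, IsSelfAdjoint g → IsSelfAdjoint ((c : ℂ) • g) := by
      intro c g hg
      rw [IsSelfAdjoint, star_smul, hg.star_eq]; simp
    refine ⟨_, ⟨(s : ℂ) • h + (t : ℂ) • h', add_mem (tmt_smul_mem _ _ hM) (tmt_smul_mem _ _ hM'),
      (hadj s hsa).add (hadj t hsa'), ?_, rfl⟩, ?_⟩
    · refine (norm_add_le _ _).trans ?_
      rw [norm_smul, norm_smul, Complex.norm_real, Complex.norm_real, Real.norm_of_nonneg hs,
        Real.norm_of_nonneg ht]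
      nlinarith
    · simp only [f, add_apply, smul_apply, smul_add, map_add]
      rw [smul_comm (2 * μ) (s : ℂ), smul_comm (2 * μ) (t : ℂ), Complex.coe_smul, Complex.coe_smul,
        P.map_smul s, P.map_smul t]
  obtain ⟨_, ⟨_, ⟨h, hM, hsa, hn, rfl⟩, rfl⟩, hv⟩ := tmt_nearest (f '' D)
    ⟨_, _, ⟨0, zero_mem _, .zero _, by simpa using hr0, rfl⟩, rfl⟩ hScl hSconv (P (x ξ))
  refine ⟨h, hM, hsa, ?_⟩
  set w := P (x ξ) with hw
  set k := w - f (h ξ) with hk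
  have hkK : k ∈ tmtReal A.commutant ξ := Submodule.sub_mem _ (hPK _) (hPK _)
  set B : ℝ := ‖x‖ * ‖ξ‖ ^ 2 + (‖w‖ + ‖P‖ * (‖2 * μ‖ * (r * ‖ξ‖))) with hB
  have hB0 : 0 ≤ B := by positivity
  -- An element `a ξ` at distance less than `δ` from `k` is tested against `s = f (r g ξ)`, where `g`
  -- is the approximate sign of `a`.
  have hest : ∀ δ > 0, ‖k‖ ^ 2 ≤ δ * B := by
    intro δ hδ
    obtain ⟨_, ⟨a, haM, hasa, rfl⟩, hka⟩ := Metric.mem_closure_iff.1 hkK δ hδ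
    obtain ⟨g, hgM, hgsa, hgn, hga, hineq⟩ := tmt_abs_bound A ξ hx haM hasa hδ
    have hrg : ‖(r : ℂ) • g‖ ≤ r := by
      rw [norm_smul, Complex.norm_real, Real.norm_of_nonneg hr0]
      exact mul_le_of_le_one_right hr0 hgn
    have hsD : ((r : ℂ) • g) ξ ∈ D := by
      refine ⟨(r : ℂ) • g, tmt_smul_mem _ _ hgM, ?_, hrg, rfl⟩
      rw [IsSelfAdjoint, star_smul, hgsa.star_eq]; simp
    set s := f (((r : ℂ) • g) ξ) with hs
    have h1 := hv s ⟨_, hsD, rfl⟩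
    have haK := tmt_mem_real haM hasa ξ
    have h2 : (inner ℂ (a ξ) w).re = (inner ℂ ξ (x (a ξ))).re := by
      rw [hw, hPin _ _ haK, tmt_inner_sa hasa, tmt_comm hx haM]
    have h3 : (inner ℂ (a ξ) s).re = ‖x‖ * (inner ℂ ξ (a (g ξ))).re := by
      have him : (inner ℂ ξ (a (g ξ))).im = 0 := by
        rw [← Complex.conj_eq_iff_im, inner_conj_symm, tmt_inner_sa hasa, tmt_inner_sa hgsa]
        exact congrArg (fun T : H →L[ℂ] H => inner ℂ ξ (T ξ)) hga
      rw [hs, hPin _ _ haK, smul_apply, inner_smul_right, inner_smul_right, tmt_inner_sa hasa,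
        Complex.mul_re, Complex.re_ofReal_mul, Complex.im_ofReal_mul, him, ← hrx]
      simp
      ring
    have hsn : ‖s‖ ≤ ‖P‖ * (‖2 * μ‖ * (r * ‖ξ‖)) := by
      refine (P.le_opNorm _).trans (mul_le_mul_of_nonneg_left ?_ (norm_nonneg _))
      rw [norm_smul]
      refine mul_le_mul_of_nonneg_left ?_ (norm_nonneg _)
      exact ContinuousLinearMap.le_of_opNorm_le _ hrg _
    have h4 : (inner ℂ (k - a ξ) (w - s)).re ≤
        δ * (‖w‖ + ‖P‖ * (‖2 * μ‖ * (r * ‖ξ‖))) := by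
      refine (Complex.re_le_norm _).trans ((norm_inner_le_norm _ _).trans ?_)
      rw [dist_eq_norm] at hka
      exact mul_le_mul hka.le ((norm_sub_le _ _).trans (by linarith)) (norm_nonneg _) hδ.le
    have h5 : ‖k‖ ^ 2 = (inner ℂ k (s - f (h ξ))).re + (inner ℂ (a ξ) w).re -
        (inner ℂ (a ξ) s).re + (inner ℂ (k - a ξ) (w - s)).re := by
      have h6 : (inner ℂ k k).re = ‖k‖ ^ 2 := inner_self_eq_norm_sq (𝕜 := ℂ) _
      rw [← h6]
      conv_lhs => rw [show inner ℂ k k = inner ℂ k ((s - f (h ξ)) + (w - s)) by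
        rw [hk]; congr 1; abel]
      rw [inner_add_right, inner_sub_left k (a ξ), inner_sub_right (a ξ) w s]
      simp only [Complex.add_re, Complex.sub_re]
      ring
    rw [h5, hB, h2, h3]
    linarith
  have hk0 : k = 0 := by
    rw [← norm_eq_zero, ← sq_eq_zero_iff]
    by_contra hne
    have hpos : 0 < ‖k‖ ^ 2 := lt_of_le_of_ne (by positivity) (Ne.symm hne)
    have h1 := hest (‖k‖ ^ 2 / (B + 1)) (by positivity)
    rw [div_mul_eq_mul_div, le_div_iff₀ (by positivity)] at h1
    nlinarith
  exact sub_eq_zero.1 hk0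

/-- The Radon–Nikodym identity, as an identity between functionals on the commutant. For `a`
self-adjoint it is the equality of the real inner products of `a ξ` with `x ξ` and with
`2 conj l • h ξ`; both sides are complex linear in `a`. -/
lemma tmt_rn_identity (A : VonNeumannAlgebra H) (ξ : H) {P : H →L[ℝ] H}
    (hP : ∀ v, ∀ k ∈ tmtReal A.commutant ξ, (inner ℂ k (v - P v)).re = 0)
    {x h : H →L[ℂ] H} (hx : x ∈ A) (hxsa : IsSelfAdjoint x) (hsa : IsSelfAdjoint h) {l : ℂ}
    (heq : P (x ξ) = P ((2 * starRingEnd ℂ l) • h ξ)) {a : H →L[ℂ] H} (ha : a ∈ A.commutant) :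
    inner ℂ ξ (x (a ξ)) = l * inner ℂ ξ (h (a ξ)) + starRingEnd ℂ l * inner ℂ ξ (a (h ξ)) := by
  have key : ∀ b ∈ A.commutant, IsSelfAdjoint b → inner ℂ ξ (x (b ξ)) =
      l * inner ℂ ξ (h (b ξ)) + starRingEnd ℂ l * inner ℂ ξ (b (h ξ)) := by
    intro b hb hbsa
    have hbK := tmt_mem_real hb hbsa ξ
    have h1 := hP (x ξ) _ hbK
    have h2 := hP ((2 * starRingEnd ℂ l) • h ξ) _ hbK
    rw [inner_sub_right, Complex.sub_re] at h1 h2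
    have e1 : inner ℂ ξ (x (b ξ)) = inner ℂ (b ξ) (x ξ) := by
      rw [tmt_inner_sa hbsa, tmt_comm hx hb]
    have e2 : inner ℂ ξ (h (b ξ)) = starRingEnd ℂ (inner ℂ ξ (b (h ξ))) := by
      rw [inner_conj_symm, tmt_inner_sa hbsa, tmt_inner_sa hsa]
    have e3 : inner ℂ (b ξ) (h ξ) = inner ℂ ξ (b (h ξ)) := tmt_inner_sa hbsa _ _
    have him := tmt_real_im A ξ hbK hx hxsa
    rw [inner_smul_right, e3] at h2
    rw [e2, e1]
    rw [heq] at h1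
    have h3 : (inner ℂ (b ξ) (x ξ)).re = (2 * starRingEnd ℂ l * inner ℂ ξ (b (h ξ))).re := by
      linarith
    generalize inner ℂ ξ (b (h ξ)) = z at h3 ⊢
    refine Complex.ext ?_ ?_
    · rw [h3]
      simp [Complex.mul_re]
      ring
    · rw [him]
      simp [Complex.mul_im]
      ring
  obtain ⟨b, hb, c, hc, hbsa, hcsa, rfl⟩ := tmt_re_im _ ha
  have h1 := key b hb hbsa
  have h2 := key c hc hcsa
  simp only [add_apply, smul_apply, map_add, map_smul, inner_add_right, inner_smul_right, h1, h2]
  ring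

end RadonNikodym

/-! ### Commutation -/

section Conclusion

variable {H : Type*} [NormedAddCommGroup H] [InnerProductSpace ℂ H] [CompleteSpace H]

/-- Additive functionals for which multiplication of the argument by `i` multiplies the value by the
same constant `c` are determined by their values at `x ξ` with `x ∈ A` self-adjoint. -/
lemma tmt_ext_sa (A : VonNeumannAlgebra H) (ξ : H) (hd : Dense {v | ∃ x ∈ A, x ξ = v}) (c : ℂ)
    {F G : H → ℂ} (hFc : Continuous F) (hGc : Continuous G)
    (hFa : ∀ v w, F (v + w) = F v + F w) (hGa : ∀ v w, G (v + w) = G v + G w)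
    (hFI : ∀ v, F (Complex.I • v) = c * F v) (hGI : ∀ v, G (Complex.I • v) = c * G v)
    (h : ∀ x ∈ A, IsSelfAdjoint x → F (x ξ) = G (x ξ)) (v : H) : F v = G v := by
  refine congrFun (hFc.ext_on hd hGc ?_) v
  rintro _ ⟨x, hx, rfl⟩
  obtain ⟨b, hb, d, hd, hbsa, hdsa, rfl⟩ := tmt_re_im _ hx
  rw [add_apply, smul_apply, hFa, hGa, hFI, hGI, h b hb hbsa, h d hd hdsa]

/-- The case `μ = 1 / 2` of the Radon–Nikodym theorem: the projection onto `K` of `z ξ`, for `z ∈ A`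
self-adjoint, is itself of the form `c ξ` with `c` in the commutant, and `i z ξ` is orthogonal to
`K`. Hence the projections `P` and `-i P i` are explicit on `z ξ`. -/
lemma tmt_half (A : VonNeumannAlgebra H) (ξ : H) (hd : Dense {v | ∃ x ∈ A, x ξ = v})
    {P : H →L[ℝ] H} (hPK : ∀ v, P v ∈ tmtReal A.commutant ξ)
    (hP : ∀ v, ∀ k ∈ tmtReal A.commutant ξ, (inner ℂ k (v - P v)).re = 0)
    {z : H →L[ℂ] H} (hz : z ∈ A) (hzsa : IsSelfAdjoint z) :
    ∃ c ∈ A.commutant, IsSelfAdjoint c ∧ P (z ξ) = c ξ ∧ P (Complex.I • z ξ) = 0 ∧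
      ∀ a ∈ A.commutant,
        2 * inner ℂ ξ (z (a ξ)) = inner ℂ ξ (c (a ξ)) + inner ℂ ξ (a (c ξ)) := by
  obtain ⟨c, hc, hcsa, heq⟩ := tmt_radon_nikodym A ξ hd hPK hP hz (μ := 1 / 2) (by norm_num)
  have hfix : ∀ k ∈ tmtReal A.commutant ξ, P k = k := by
    intro k hk
    have h1 := hP k _ (Submodule.sub_mem _ hk (hPK k))
    have h2 : ‖k - P k‖ ^ 2 = 0 := by
      rw [← inner_self_eq_norm_sq (𝕜 := ℂ)]
      exact h1
    exact (sub_eq_zero.1 (norm_eq_zero.1 (sq_eq_zero_iff.1 h2))).symm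
  refine ⟨c, hc, hcsa, ?_, ?_, ?_⟩
  · rw [heq]
    norm_num
    exact hfix _ (tmt_mem_real hc hcsa ξ)
  · have h1 := hP (Complex.I • z ξ) _ (hPK (Complex.I • z ξ))
    have h2 := tmt_real_im A ξ (hPK (Complex.I • z ξ)) hz hzsa
    rw [inner_sub_right, inner_smul_right, Complex.sub_re, Complex.I_mul_re, h2] at h1
    have h3 : ‖P (Complex.I • z ξ)‖ ^ 2 = 0 := by
      rw [← inner_self_eq_norm_sq (𝕜 := ℂ)]
      change (inner ℂ _ _).re = 0
      linarith
    exact norm_eq_zero.1 (sq_eq_zero_iff.1 h3)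
  · intro a ha
    have h1 := tmt_rn_identity A ξ hP hz hzsa hcsa (l := 1 / 2) (by rw [heq]; simp [Complex.conj_ofNat]) ha
    rw [h1]
    simp [Complex.conj_ofNat]
    ring

/-- The operator identity `S x S = l (2 - R) h R + conj l R h (2 - R)`, in weak form. By density it
is enough to test it on `v = v' ξ` and `w = w' ξ` with `v'` and `w'` self-adjoint in `A`; there
`S` and `R` both act as `v' ξ ↦ c ξ` with `c` in the commutant, and the identity is a combination of
the Radon–Nikodym identities for `x`, `v'` and `w'`. -/
lemma tmt_key (A : VonNeumannAlgebra H) (ξ : H) (hd : Dense {v | ∃ x ∈ A, x ξ = v})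
    {P : H →L[ℝ] H} (hPK : ∀ v, P v ∈ tmtReal A.commutant ξ)
    (hP : ∀ v, ∀ k ∈ tmtReal A.commutant ξ, (inner ℂ k (v - P v)).re = 0)
    {R : H →L[ℂ] H} (hR : ∀ v, R v = P v - Complex.I • P (Complex.I • v))
    {S : H → H} (hS : ∀ v, S v = P v + Complex.I • P (Complex.I • v))
    {x h : H →L[ℂ] H} (hx : x ∈ A) (hxsa : IsSelfAdjoint x) (hh : h ∈ A.commutant)
    (hsa : IsSelfAdjoint h) {l : ℂ} (heq : P (x ξ) = P ((2 * starRingEnd ℂ l) • h ξ)) (v w : H) :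
    inner ℂ (x (S v)) (S w) = l * inner ℂ ((2 - R) w) (h (R v)) +
      starRingEnd ℂ l * inner ℂ (R w) (h ((2 - R) v)) := by
  have hSadd : ∀ v w, S (v + w) = S v + S w := by
    intro v w
    simp only [hS, smul_add, map_add]
    abel
  have hSI : ∀ v, S (Complex.I • v) = -(Complex.I • S v) := by
    intro v
    simp only [hS, smul_smul, Complex.I_mul_I, neg_smul, one_smul, smul_neg, map_neg, smul_add]
    abel
  have hSc : Continuous S := by
    rw [funext hS]
    fun_prop
  have hsa_case : ∀ v' ∈ A, IsSelfAdjoint v' → ∀ w' ∈ A, IsSelfAdjoint w' →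
      inner ℂ (x (S (v' ξ))) (S (w' ξ)) = l * inner ℂ ((2 - R) (w' ξ)) (h (R (v' ξ))) +
        starRingEnd ℂ l * inner ℂ (R (w' ξ)) (h ((2 - R) (v' ξ))) := by
    intro v' hv hvsa w' hw hwsa
    obtain ⟨c, hc, hcsa, hc1, hc2, hc3⟩ := tmt_half A ξ hd hPK hP hv hvsa
    obtain ⟨d, hdM, hdsa, hd1, hd2, hd3⟩ := tmt_half A ξ hd hPK hP hw hwsa
    have e1 := tmt_rn_identity A ξ hP hx hxsa hsa heq (mul_mem hc hdM)
    have e2 := hd3 _ (mul_mem hh hc)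
    have e3 := hc3 _ (mul_mem hdM hh)
    simp only [mul_apply_eq_comp] at e1 e2 e3
    have h2 : ∀ u : H, (2 - R) u = (2 : ℂ) • u - R u := fun u => by
      rw [sub_apply, two_smul, ← one_add_one_eq_two, add_apply, one_apply_eq_self]
    simp only [h2, hS, hR, hc1, hc2, hd1, hd2, smul_zero, add_zero, sub_zero, inner_sub_left,
      inner_smul_left, map_sub, map_smul, inner_sub_right, inner_smul_right, Complex.conj_ofNat]
    have f1 : inner ℂ (x (c ξ)) (d ξ) = inner ℂ ξ (x (c (d ξ))) := by
      rw [tmt_comm hx hc, tmt_inner_sa hcsa, tmt_inner_sa hxsa, tmt_comm hx hc]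
    have f2 : inner ℂ (w' ξ) (h (c ξ)) = inner ℂ ξ (w' (h (c ξ))) := tmt_inner_sa hwsa _ _
    have f3 : inner ℂ (d ξ) (h (v' ξ)) = inner ℂ ξ (v' (d (h ξ))) := by
      rw [tmt_inner_sa hdsa, tmt_comm hv hdM, tmt_comm hv hh]
    have f4 : inner ℂ (d ξ) (h (c ξ)) = inner ℂ ξ (d (h (c ξ))) := tmt_inner_sa hdsa _ _
    rw [f1, f2, f3, f4, e1, e2, e3]
    ring
  refine tmt_ext_sa A ξ hd Complex.I (F := fun v => inner ℂ (x (S v)) (S w))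
    (G := fun v => l * inner ℂ ((2 - R) w) (h (R v)) +
      starRingEnd ℂ l * inner ℂ (R w) (h ((2 - R) v)))
    (by fun_prop) (by fun_prop) ?_ ?_ ?_ ?_ ?_ v
  · intro v v'
    simp only [hSadd, map_add, inner_add_left]
  · intro v v'
    simp only [map_add, inner_add_right]
    ring
  · intro v
    simp only [hSI, map_neg, map_smul, inner_neg_left, inner_smul_left, Complex.conj_I]
    ring
  · intro v
    simp only [map_smul, inner_smul_right]
    ring
  intro v' hv hvsa
  refine tmt_ext_sa A ξ hd (-Complex.I) (F := fun w => inner ℂ (x (S (v' ξ))) (S w))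
    (G := fun w => l * inner ℂ ((2 - R) w) (h (R (v' ξ))) +
      starRingEnd ℂ l * inner ℂ (R w) (h ((2 - R) (v' ξ))))
    (by fun_prop) (by fun_prop) ?_ ?_ ?_ ?_ ?_ w
  · intro v v'
    simp only [hSadd, inner_add_right]
  · intro v v'
    simp only [map_add, inner_add_left]
    ring
  · intro v
    simp only [hSI, inner_neg_right, inner_smul_right]
    ring
  · intro v
    simp only [map_smul, inner_smul_left, Complex.conj_I]
    ring
  exact hsa_case v' hv hvsa

end Conclusion

/-- Tomita's theorem: if a von Neumann algebra `A` on a Hilbert space `H` admits a cyclic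
and separating vector `ξ`, then there is a conjugate-linear isometric involution `J` on `H`
such that every `x ∈ A` commutes with `J y* J⁻¹` for every `y ∈ A`. -/
theorem tomita_modular_conjugation
    (H : Type*) [NormedAddCommGroup H] [InnerProductSpace ℂ H] [CompleteSpace H]
    (A : VonNeumannAlgebra H) (ξ : H)
    (hcyclic : Dense (Submodule.span ℂ ((fun x : H →L[ℂ] H => x ξ) '' (A : Set (H →L[ℂ] H))) :
      Set H))
    (hseparating : ∀ x ∈ A, x ξ = 0 → x = 0) :
    ∃ J : H ≃ₗᵢ⋆[ℂ] H, (∀ v : H, J (J v) = v) ∧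
      ∀ x ∈ A, ∀ y ∈ A, ∀ v : H,
        x (J ((star y) (J.symm v))) = J ((star y) (J.symm (x v))) := by
  have hd := tmt_dense_span A ξ hcyclic
  have hd' := tmt_dense_commutant A ξ hseparating
  obtain ⟨P, R, T, u, J, hPK, hP, hR, hJT, hJJ, hRsa, hTsa, hu0, hun, huc, hdense⟩ :=
    tmt_modular (tmtReal A.commutant ξ) (tmt_isClosed_real _ _)
      (fun v h h' => tmt_real_inter A ξ hd v h h')
      (fun v h => tmt_real_dense A.commutant ξ hd' v h)
  have hsa : ∀ x ∈ A, IsSelfAdjoint x → ∀ z ∈ A, ∀ v, J (x (J (z v))) = z (J (x (J v))) := by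
    intro x hx hxsa z hz v
    refine tmt_commute_of_family (R := R) (T := T) hu0 hun huc hdense
      ((J.toContinuousLinearEquiv : H →L⋆[ℂ] H).comp
        (x.comp (J.toContinuousLinearEquiv : H →L⋆[ℂ] H))) z ?_ v
    intro θ hθ
    -- The Radon–Nikodym theorem applies with `μ = exp (i θ / 2)`, whose real part `cos (θ / 2)` is
    -- positive because `|θ| < π`.
    have hl : starRingEnd ℂ (Complex.exp (-(Complex.I * θ / 2))) =
        Complex.exp (Complex.I * θ / 2) := by
      rw [← Complex.exp_conj]
      congr 1
      simp [Complex.conj_ofNat, neg_div]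
    have hre : 0 < (Complex.exp (Complex.I * θ / 2)).re := by
      rw [show Complex.I * θ / 2 = ((θ / 2 : ℝ) : ℂ) * Complex.I by push_cast; ring,
        Complex.exp_ofReal_mul_I_re]
      rw [abs_lt] at hθ
      exact Real.cos_pos_of_mem_Ioo ⟨by linarith, by linarith⟩
    obtain ⟨h, hh, hhsa, heq⟩ := tmt_radon_nikodym A ξ hd hPK hP hx hre
    refine ⟨h, fun v => (tmt_comm hz hh v).symm, fun a b => ?_⟩
    have key := tmt_key A ξ hd hPK hP hR (S := fun v => J (T v)) hJT hx hxsa hh hhsa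
      (hl.symm ▸ heq) a b
    rw [hl] at key
    rw [← key]
    change inner ℂ (T b) (J (x (J (T a)))) = _
    rw [← tmt_inner_conj J (J (T b)), hJJ]
  refine ⟨J, hJJ, fun x hx y hy v => ?_⟩
  have hsymm : ∀ v, J.symm v = J v := fun v => by rw [J.symm_apply_eq, hJJ]
  obtain ⟨b, hb, c, hc, hbsa, hcsa, hy'⟩ := tmt_re_im _ (star_mem hy)
  rw [hsymm, hsymm, hy']
  simp only [add_apply, smul_apply, map_add, LinearIsometryEquiv.map_smulₛₗ, map_smul,
    hsa b hb hbsa x hx, hsa c hc hcsa x hx]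
end

section
/- There exists an injective, unital, star-preserving ℝ-algebra homomorphism from the real star-algebra ℂ × ℍ × M₃(ℂ) into the real star-algebra M₂(ℍ) × M₄(ℂ). Here ℍ denotes the real quaternion algebra, M_k(R) denotes k×k matrices over R, the star operation on ℂ is complex conjugation, on ℍ is quaternion conjugation, and on matrix algebras is the conjugate-transpose (entrywise star followed by transpose); the algebra structures are the product (direct sum) star-algebra structures over ℝ. -/
/-!
The embedding is the block-diagonal one, `(z, q, m) ↦ (diag(z, q), diag(z, m))`, where `ℂ` sits in
`ℍ` as `ℝ + ℝ i`, so `z` fills a `1 × 1` block in each factor. It is multiplicative,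
unital and star-preserving because block-diagonal matrices are multiplied and conjugate-transposed
block by block and `ℂ → ℍ` respects conjugation; it is injective because the blocks can be
read off.
-/

/-- The homomorphism `(z, q) ↦ diag(z, q)` from `ℂ × ℍ` to `M₂(ℍ)`. -/
noncomputable def diagComplexQuaternion :
    (ℂ × Quaternion ℝ) →ₐ[ℝ] Matrix (Fin 2) (Fin 2) (Quaternion ℝ) where
  toFun x := Matrix.diagonal ![Quaternion.ofComplex x.1, x.2]
  map_one' := by
    ext1 i j
    fin_cases i <;> fin_cases j <;> simp
  map_mul' x y := by
    rw [Matrix.diagonal_mul_diagonal]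
    congr 1
    ext1 i
    fin_cases i <;> simp
  map_zero' := by
    ext1 i j
    fin_cases i <;> fin_cases j <;> simp
  map_add' x y := by
    rw [Matrix.diagonal_add]
    congr 1
    ext1 i
    fin_cases i <;> simp
  commutes' r := by
    rw [Matrix.algebraMap_eq_diagonal]
    congr 1
    ext1 i
    fin_cases i
    · exact Quaternion.ofComplex.commutes r
    · rfl

theorem diagComplexQuaternion_injective : Function.Injective diagComplexQuaternion := by
  rintro ⟨z, q⟩ ⟨w, p⟩ h
  have h' := Matrix.diagonal_injective h
  exact Prod.ext (Quaternion.ofComplex.toRingHom.injective (congrFun h' 0)) (congrFun h' 1)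

theorem diagComplexQuaternion_star (x : ℂ × Quaternion ℝ) :
    diagComplexQuaternion (star x) = star (diagComplexQuaternion x) := by
  have hz : Quaternion.ofComplex (star x.1) = star (Quaternion.ofComplex x.1) := by
    ext <;> simp
  change Matrix.diagonal _ = Matrix.conjTranspose (Matrix.diagonal _)
  rw [Matrix.diagonal_conjTranspose]
  congr 1
  ext1 i
  fin_cases i
  · exact hz
  · rfl

/-- The homomorphism `(z, m) ↦ diag(z, m)` from `ℂ × Mₙ(ℂ)` to matrices indexed by
`Fin 1 ⊕ Fin n`; the scalar `z` is encoded as the `1 × 1` matrix `algebraMap z`. -/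
noncomputable def blockComplexMatrix (n : ℕ) :
    (ℂ × Matrix (Fin n) (Fin n) ℂ) →ₐ[ℝ] Matrix (Fin 1 ⊕ Fin n) (Fin 1 ⊕ Fin n) ℂ where
  toFun x := Matrix.fromBlocks (algebraMap ℂ _ x.1) 0 0 x.2
  map_one' := by simp
  map_mul' x y := by simp [Matrix.fromBlocks_multiply]
  map_zero' := by simp
  map_add' x y := by simp [Matrix.fromBlocks_add]
  commutes' r := by
    have h : algebraMap ℝ (Matrix (Fin 1 ⊕ Fin n) (Fin 1 ⊕ Fin n) ℂ) r =
        Matrix.fromBlocks (r • 1) 0 0 (r • 1) := by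
      rw [Algebra.algebraMap_eq_smul_one, ← Matrix.fromBlocks_one, Matrix.fromBlocks_smul,
        smul_zero, smul_zero]
    rw [h]
    simp [Algebra.algebraMap_eq_smul_one]

theorem blockComplexMatrix_injective (n : ℕ) : Function.Injective (blockComplexMatrix n) := by
  rintro ⟨z, a⟩ ⟨w, b⟩ h
  obtain ⟨h₁, -, -, h₂⟩ := Matrix.fromBlocks_inj.1 h
  exact Prod.ext ((algebraMap ℂ (Matrix (Fin 1) (Fin 1) ℂ)).injective h₁) h₂

theorem blockComplexMatrix_star (n : ℕ) (x : ℂ × Matrix (Fin n) (Fin n) ℂ) :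
    blockComplexMatrix n (star x) = star (blockComplexMatrix n x) := by
  change Matrix.fromBlocks _ _ _ _ = Matrix.conjTranspose (Matrix.fromBlocks _ _ _ _)
  rw [Matrix.fromBlocks_conjTranspose]
  simp only [Prod.fst_star, Prod.snd_star, algebraMap_star_comm, Matrix.star_eq_conjTranspose,
    Matrix.conjTranspose_zero]

/-- The real star-algebra `ℂ ⊕ ℍ ⊕ M₃(ℂ)` of the finite geometry `F` of the Standard
Model embeds, by an injective unital star-preserving `ℝ`-algebra homomorphism, into the
real star-algebra `M₂(ℍ) ⊕ M₄(ℂ)`. -/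
theorem standardModel_algebra_embeds
    : ∃ φ : (ℂ × (Quaternion ℝ) × Matrix (Fin 3) (Fin 3) ℂ) →ₐ[ℝ]
        (Matrix (Fin 2) (Fin 2) (Quaternion ℝ) × Matrix (Fin 4) (Fin 4) ℂ),
      Function.Injective φ ∧ ∀ x, φ (star x) = star (φ x) := by
  let e : Matrix (Fin 1 ⊕ Fin 3) (Fin 1 ⊕ Fin 3) ℂ ≃ₐ[ℝ] Matrix (Fin 4) (Fin 4) ℂ :=
    Matrix.reindexAlgEquiv ℝ ℂ (finSumFinEquiv (m := 1) (n := 3))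
  let z := AlgHom.fst ℝ ℂ (Quaternion ℝ × Matrix (Fin 3) (Fin 3) ℂ)
  let t := AlgHom.snd ℝ ℂ (Quaternion ℝ × Matrix (Fin 3) (Fin 3) ℂ)
  let f := diagComplexQuaternion.comp (z.prod ((AlgHom.fst ℝ _ _).comp t))
  let g := e.toAlgHom.comp ((blockComplexMatrix 3).comp (z.prod ((AlgHom.snd ℝ _ _).comp t)))
  refine ⟨f.prod g, ?_, ?_⟩
  · rintro ⟨z, q, m⟩ ⟨w, p, n⟩ h
    have h₁ : (z, q) = (w, p) := diagComplexQuaternion_injective (congrArg Prod.fst h)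
    have h₂ : (z, m) = (w, n) :=
      blockComplexMatrix_injective 3 (e.injective (congrArg Prod.snd h))
    simp_all
  · rintro ⟨z, q, m⟩
    refine Prod.ext (diagComplexQuaternion_star (z, q)) ?_
    exact (congrArg e (blockComplexMatrix_star 3 (z, m))).trans
      (Matrix.conjTranspose_reindex _ _ _).symm
end

section
/- Let H be a complex Hilbert space, let D : H → H be a continuous self-adjoint linear operator, and let J : H → H be a conjugate-linear isometric bijection with J² = −1 (i.e. J(J(v)) = −v for all v) satisfying D ∘ J = J ∘ D. Let γ : H → H be a continuous self-adjoint unitary operator with γ ∘ D = −D ∘ γ and J ∘ γ = −γ ∘ J. Then for all vectors ξ, η ∈ H with γξ = ξ and γη = η, one has ⟨Jξ, Dη⟩ = −⟨Jη, Dξ⟩; that is, the ℂ-bilinear form (ξ, η) ↦ ⟨Jξ, Dη⟩ on the +1 eigenspace of γ is antisymmetric. (These are exactly the sign rules ε = −1, ε′ = 1, ε″ = −1 of KO-dimension 2 modulo 8, which permit the definition of the fermionic action.) -/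
/-!
Writing `η = -J (J η)` and using that `D` is self-adjoint and commutes with `J`,
`⟪J ξ, D η⟫ = ⟪J (D ξ), η⟫ = -⟪J (D ξ), J (J η)⟫ = -⟪J η, D ξ⟫`,
where the last equality is antiunitarity of `J`. Antiunitarity follows from norm preservation by
polarization.
-/

open scoped ComplexInnerProductSpace in
/-- A conjugate-linear isometry reverses the inner product. The real parts agree by polarization;
the imaginary parts follow by replacing `y` with `I • y`. -/
theorem inner_map_map_of_conjugateLinear
    {H : Type*} [NormedAddCommGroup H] [InnerProductSpace ℂ H]
    (J : H ≃ₗᵢ⋆[ℂ] H) (x y : H) : ⟪J x, J y⟫ = ⟪y, x⟫ := by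
  have hre (x y : H) : (⟪J x, J y⟫).re = (⟪x, y⟫).re := by
    have h1 := re_inner_eq_norm_add_mul_self_sub_norm_sub_mul_self_div_four (𝕜 := ℂ) (J x) (J y)
    have h2 := re_inner_eq_norm_add_mul_self_sub_norm_sub_mul_self_div_four (𝕜 := ℂ) x y
    rw [← map_add, ← map_sub, J.norm_map, J.norm_map, ← h2] at h1
    exact h1
  have him : (⟪J x, J y⟫).im = -(⟪x, y⟫).im := by
    have h := hre x (Complex.I • y)
    rw [map_smulₛₗ, inner_smul_right, inner_smul_right] at h
    simp at h
    linarith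
  rw [← inner_conj_symm y x]
  apply Complex.ext
  · rw [Complex.conj_re, hre]
  · rw [Complex.conj_im, him]

open scoped ComplexInnerProductSpace in
/-- KO-dimension 2 mod 8 sign rules: if `D` is a continuous self-adjoint operator,
`J` a conjugate-linear isometric bijection with `J² = -1` commuting with `D`, and `γ` a
continuous self-adjoint unitary with `γD = -Dγ` and `Jγ = -γJ`, then the bilinear form
`(ξ, η) ↦ ⟨Jξ, Dη⟩` is antisymmetric on the `+1` eigenspace of `γ`. -/
theorem fermionic_form_antisymmetric
    (H : Type*) [NormedAddCommGroup H] [InnerProductSpace ℂ H]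
    (D : H →L[ℂ] H) (hD : ∀ x y : H, ⟪D x, y⟫ = ⟪x, D y⟫)
    (J : H ≃ₗᵢ⋆[ℂ] H) (hJ2 : ∀ v : H, J (J v) = -v)
    (hDJ : ∀ v : H, D (J v) = J (D v))
    (γ : H →L[ℂ] H) (hγ : ∀ x y : H, ⟪γ x, y⟫ = ⟪x, γ y⟫)
    (hγ2 : ∀ v : H, γ (γ v) = v)
    (hγD : ∀ v : H, γ (D v) = - D (γ v))
    (hJγ : ∀ v : H, J (γ v) = - γ (J v)) :
    ∀ ξ η : H, γ ξ = ξ → γ η = η → ⟪J ξ, D η⟫ = - ⟪J η, D ξ⟫ := by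
  intro ξ η _ _
  rw [← hD, hDJ, ← inner_map_map_of_conjugateLinear J (D ξ) (J η), hJ2, inner_neg_right, neg_neg]
end
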